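/- arXiv:2107.10000 — 3 statements merged into one kernel-verified Lean document; each statement's English description precedes it below -/
import Mathlib

section
/- The global Hoffman constant Hof F := sup_{b ∈ dom F, x ∈ ℝⁿ} d(x,F(b))/d(b,F⁻¹(x)) satisfies Hof F = sup { d_*(0ₙ, conv{a_t : t ∈ J})⁻¹ : J ⊆ T compact and 0ₙ ∉ conv{a_t : t ∈ J} }, where conv denotes the convex hull. -/
open Filter Set EMetric
open scoped Topology ENNReal NNReal

/-- The feasible set `F(b) = {x ∈ ℝⁿ : aₜ'x ≤ bₜ for all t ∈ T}`. -/
def feas {n : ℕ} {T : Type*} [TopologicalSpace T]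
    (a : T → (Fin n → ℝ)) (b : C(T, ℝ)) : Set (Fin n → ℝ) :=
  {x | ∀ t : T, (∑ i, a t i * x i) ≤ b t}

/-- Distance (in `[0,+∞]`, with `d(z,∅) = +∞`) from `z` to `S ⊆ ℝⁿ` with respect to the
norm `p` on `ℝⁿ`. -/
noncomputable def pDist {n : ℕ} (p : Seminorm ℝ (Fin n → ℝ))
    (z : Fin n → ℝ) (S : Set (Fin n → ℝ)) : ℝ≥0∞ :=
  ⨅ s ∈ S, ENNReal.ofReal (p (z - s))

/-- The dual norm `‖u‖_* = sup_{p(x) ≤ 1} |u'x|` of `u ∈ ℝⁿ`, valued in `[0,+∞]`. -/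
noncomputable def dualNorm {n : ℕ} (p : Seminorm ℝ (Fin n → ℝ)) (u : Fin n → ℝ) : ℝ≥0∞ :=
  ⨆ (x : Fin n → ℝ) (_ : p x ≤ 1), ENNReal.ofReal |∑ i, u i * x i|

/-- The dual distance `d_*(0ₙ, S) = inf_{u ∈ S} ‖u‖_*`, valued in `[0,+∞]` (`= +∞` if `S = ∅`). -/
noncomputable def dualDist0 {n : ℕ} (p : Seminorm ℝ (Fin n → ℝ)) (S : Set (Fin n → ℝ)) : ℝ≥0∞ :=
  ⨅ u ∈ S, dualNorm p u

/-- In finite dimension the convex hull of a compact set is compact, by Carathéodory. -/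
theorem IsCompact.convexHull_of_finiteDimensional {E : Type*} [NormedAddCommGroup E]
    [NormedSpace ℝ E] [FiniteDimensional ℝ E] {K : Set E} (hK : IsCompact K) :
    IsCompact (convexHull ℝ K) := by
  let comb (k : ℕ) (q : (Fin k → ℝ) × (Fin k → E)) : E := ∑ i, q.1 i • q.2 i
  let S (k : ℕ) : Set ((Fin k → ℝ) × (Fin k → E)) := stdSimplex ℝ (Fin k) ×ˢ univ.pi fun _ => K
  have hunion : convexHull ℝ K = ⋃ k ∈ Finset.range (Module.finrank ℝ E + 2), comb k '' S k := by
    apply Subset.antisymm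
    · intro x hx
      obtain ⟨ι, _, z, w, hz, hind, hw, hw1, hx⟩ := eq_pos_convex_span_of_mem_convexHull hx
      have hcard : Fintype.card ι < Module.finrank ℝ E + 2 := by
        have h := hind.card_le_finrank_succ
        have h' := Submodule.finrank_le (vectorSpan ℝ (range z))
        omega
      let e := (Fintype.equivFin ι).symm
      refine mem_iUnion₂.2 ⟨Fintype.card ι, Finset.mem_range.2 hcard, (w ∘ e, z ∘ e),
        ⟨⟨fun i => (hw _).le, ?_⟩, fun i _ => hz ⟨_, rfl⟩⟩, ?_⟩
      · simpa using (Equiv.sum_comp e w).trans hw1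
      · simpa [comb] using (Equiv.sum_comp e fun i => w i • z i).trans hx
    · refine iUnion₂_subset fun k _ => ?_
      rintro _ ⟨⟨w, z⟩, ⟨hw, hz⟩, rfl⟩
      exact (convex_convexHull ℝ K).sum_mem (fun i _ => hw.1 i) hw.2
        fun i _ => subset_convexHull ℝ K (hz i (mem_univ i))
  rw [hunion]
  refine (Finset.finite_toSet _).isCompact_biUnion fun k _ => ?_
  refine ((isCompact_stdSimplex ℝ (Fin k)).prod (isCompact_univ_pi fun _ => hK)).image ?_
  fun_prop

/-- Every linear functional on `ι → ℝ` is the dot product with a vector. -/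
theorem StrongDual.exists_eq_dotProduct {ι : Type*} [Fintype ι] (f : StrongDual ℝ (ι → ℝ)) :
    ∃ z : ι → ℝ, ∀ u, f u = u ⬝ᵥ z := by
  classical
  exact ⟨fun i => f fun j => if i = j then 1 else 0, fun u =>
    (f : (ι → ℝ) →ₗ[ℝ] ℝ).pi_apply_eq_sum_univ u⟩

/-- Gordan's alternative for a compact family of vectors. -/
theorem IsCompact.exists_dotProduct_le_neg_one {n : ℕ} {K : Set (Fin n → ℝ)} (hK : IsCompact K)
    (h0 : (0 : Fin n → ℝ) ∉ convexHull ℝ K) : ∃ z : Fin n → ℝ, ∀ u ∈ K, u ⬝ᵥ z ≤ -1 := by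
  obtain ⟨f, c, hf, hc⟩ := geometric_hahn_banach_closed_point (convex_convexHull ℝ K)
    hK.convexHull_of_finiteDimensional.isClosed h0
  obtain ⟨z, hz⟩ := f.exists_eq_dotProduct
  rw [map_zero] at hc
  refine ⟨(-c)⁻¹ • z, fun u hu => ?_⟩
  have h := hf u (subset_convexHull ℝ K hu)
  rw [hz] at h
  rw [dotProduct_smul, smul_eq_mul, inv_mul_le_iff₀ (neg_pos.2 hc)]
  linarith

/-- A point of the convex hull of a finite image is a convex combination of the images. -/
theorem exists_weights_of_mem_convexHull_image {E T : Type*} [AddCommGroup E] [Module ℝ E]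
    {a : T → E} {S : Finset T} {u : E} (hu : u ∈ convexHull ℝ (a '' S)) :
    ∃ w : T → ℝ, (∀ t ∈ S, 0 ≤ w t) ∧ ∑ t ∈ S, w t = 1 ∧ ∑ t ∈ S, w t • a t = u := by
  classical
  refine convexHull_min (t := {u | ∃ w : T → ℝ, (∀ t ∈ S, 0 ≤ w t) ∧ ∑ t ∈ S, w t = 1 ∧
    ∑ t ∈ S, w t • a t = u}) ?_ ?_ hu
  · rintro _ ⟨t, ht, rfl⟩
    have ht' : t ∈ S := ht
    refine ⟨fun s => if s = t then 1 else 0, fun s _ => ?_, ?_, ?_⟩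
    · positivity
    · simp [ht']
    · simp [ite_smul, ht']
  · rintro _ ⟨v, hv, hv1, rfl⟩ _ ⟨w, hw, hw1, rfl⟩ c d hc hd hcd
    refine ⟨fun t => c * v t + d * w t, fun t ht => ?_, ?_, ?_⟩
    · have := hv t ht
      have := hw t ht
      positivity
    · rw [Finset.sum_add_distrib, ← Finset.mul_sum, ← Finset.mul_sum, hv1, hw1]
      linarith
    · simp only [add_smul, mul_smul, Finset.sum_add_distrib, Finset.smul_sum]

/-- If the system `a t ⬝ᵥ z ≤ b t` is consistent, a conic combination of its constraints can be
replaced by one with the same left-hand side and no larger right-hand side, supported on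
vectors whose convex hull misses the origin. -/
theorem exists_conic_combination_zero_notMem_convexHull {n : ℕ} {T : Type*} {a : T → Fin n → ℝ}
    {b : T → ℝ} {z : Fin n → ℝ} (hz : ∀ t, a t ⬝ᵥ z ≤ b t) (S : Finset T) (w : T → ℝ)
    (hw : ∀ t ∈ S, 0 ≤ w t) :
    ∃ (R : Finset T) (w' : T → ℝ), (∀ t ∈ R, 0 ≤ w' t) ∧
      ∑ t ∈ R, w' t • a t = ∑ t ∈ S, w t • a t ∧ ∑ t ∈ R, w' t * b t ≤ ∑ t ∈ S, w t * b t ∧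
      (0 : Fin n → ℝ) ∉ convexHull ℝ (a '' R) := by
  classical
  induction S using Finset.strongInduction generalizing w with
  | H S ih =>
  by_cases h0 : (0 : Fin n → ℝ) ∈ convexHull ℝ (a '' S)
  swap
  · exact ⟨S, w, hw, rfl, le_rfl, h0⟩
  obtain ⟨g, hg, hg1, hga⟩ := exists_weights_of_mem_convexHull_image h0
  have hgb : 0 ≤ ∑ t ∈ S, g t * b t := by
    calc (0 : ℝ) = (∑ t ∈ S, g t • a t) ⬝ᵥ z := by rw [hga, zero_dotProduct]
      _ = ∑ t ∈ S, g t * (a t ⬝ᵥ z) := by simp [sum_dotProduct]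
      _ ≤ _ := Finset.sum_le_sum fun t ht => mul_le_mul_of_nonneg_left (hz t) (hg t ht)
  have hpos : (S.filter fun t => 0 < g t).Nonempty := by
    obtain ⟨t, ht, h⟩ := Finset.exists_lt_of_sum_lt (s := S) (f := fun _ => (0 : ℝ)) (g := g)
      (by simp [hg1])
    exact ⟨t, Finset.mem_filter.2 ⟨ht, h⟩⟩
  obtain ⟨s, hs, hmin⟩ := Finset.exists_min_image _ (fun t => w t / g t) hpos
  obtain ⟨hsS, hgs⟩ := Finset.mem_filter.1 hs
  set c := w s / g s with hc
  have hc0 : 0 ≤ c := div_nonneg (hw s hsS) hgs.le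
  have hs0 : w s - c * g s = 0 := by rw [hc]; field_simp; ring
  obtain ⟨R, w', hw', ha', hb', h0'⟩ := ih (S.erase s) (Finset.erase_ssubset hsS)
    (fun t => w t - c * g t) (fun t ht => by
      have htS := Finset.mem_of_mem_erase ht
      rcases (hg t htS).eq_or_lt with h | h
      · simpa [← h] using hw t htS
      · have := hmin t (Finset.mem_filter.2 ⟨htS, h⟩)
        rw [le_div_iff₀ h] at this
        linarith)
  refine ⟨R, w', hw', ha'.trans ?_, hb'.trans ?_, h0'⟩
  · rw [Finset.sum_erase _ (by simp only [hs0, zero_smul])]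
    simp only [sub_smul, mul_smul, Finset.sum_sub_distrib, ← Finset.smul_sum, hga, smul_zero,
      sub_zero]
  · rw [Finset.sum_erase _ (by simp only [hs0, zero_mul])]
    simp only [sub_mul, mul_assoc, Finset.sum_sub_distrib, ← Finset.mul_sum]
    have := mul_nonneg hc0 hgb
    linarith

/-- Closed balls of a norm on `ℝⁿ` are compact. -/
theorem Seminorm.isCompact_setOf_sub_le {n : ℕ} (p : Seminorm ℝ (Fin n → ℝ))
    (hp : ∀ x, p x = 0 → x = 0) (x : Fin n → ℝ) (r : ℝ) : IsCompact {z | p (x - z) ≤ r} := by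
  have hcont : Continuous p := p.convexOn.locallyLipschitz.continuous
  refine Metric.isCompact_of_isClosed_isBounded
    (isClosed_le (hcont.comp (continuous_const.sub continuous_id)) continuous_const) ?_
  obtain ⟨m, hm, hmp⟩ : ∃ m > 0, ∀ y, m * ‖y‖ ≤ p y := by
    rcases (Metric.sphere (0 : Fin n → ℝ) 1).eq_empty_or_nonempty with he | hne
    · refine ⟨1, one_pos, fun y => ?_⟩
      have hy : y = 0 := by
        by_contra hy
        have : ‖y‖⁻¹ • y ∈ Metric.sphere (0 : Fin n → ℝ) 1 := by
          simp [norm_smul, norm_ne_zero_iff.2 hy]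
        simp [he] at this
      simp [hy]
    · obtain ⟨e, he, hmin⟩ := (isCompact_sphere (0 : Fin n → ℝ) 1).exists_isMinOn hne
        hcont.continuousOn
      have he1 : ‖e‖ = 1 := by simpa using he
      refine ⟨p e, (apply_nonneg p e).lt_of_ne fun h => ?_, fun y => ?_⟩
      · simp [hp e h.symm] at he1
      rcases eq_or_ne y 0 with rfl | hy
      · simp
      have hy' : 0 < ‖y‖ := norm_pos_iff.2 hy
      have : p e ≤ p (‖y‖⁻¹ • y) := hmin (by simp [norm_smul, hy'.ne'])
      rw [map_smul_eq_mul, norm_inv, norm_norm, le_inv_mul_iff₀ hy'] at this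
      linarith
  refine (Metric.isBounded_closedBall (x := x) (r := r / m)).subset fun z hz => ?_
  rw [mem_closedBall_iff_norm', le_div_iff₀ hm, mul_comm]
  exact (hmp _).trans hz

/-- If no point of a compact convex set satisfies all the constraints, some conic combination of
finitely many of them is violated on the whole set. -/
theorem exists_conic_combination_pos {n : ℕ} {T : Type*} {a : T → Fin n → ℝ} {b : T → ℝ}
    {B : Set (Fin n → ℝ)} (hB : IsCompact B) (hconv : Convex ℝ B)
    (hdisj : ∀ z ∈ B, ∃ t, b t < a t ⬝ᵥ z) :
    ∃ (S : Finset T) (w : T → ℝ), (∀ t ∈ S, 0 ≤ w t) ∧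
      ∀ z ∈ B, ∑ t ∈ S, w t * b t < (∑ t ∈ S, w t • a t) ⬝ᵥ z := by
  classical
  obtain ⟨S, hS⟩ := hB.elim_finite_subfamily_closed (fun t => {z | a t ⬝ᵥ z ≤ b t})
    (fun t => isClosed_le (continuous_const.dotProduct continuous_id) continuous_const) (by
      refine eq_empty_of_forall_notMem fun z ⟨hzB, hz⟩ => ?_
      obtain ⟨t, ht⟩ := hdisj z hzB
      exact ht.not_ge (mem_iInter.1 hz t))
  let φ : (Fin n → ℝ) → (S → ℝ) := fun z t => b t - a t ⬝ᵥ z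
  have hφc : IsCompact (φ '' B) := hB.image (continuous_pi fun t =>
    continuous_const.sub (continuous_const.dotProduct continuous_id))
  have hφ : Convex ℝ (φ '' B) := by
    rintro _ ⟨x, hx, rfl⟩ _ ⟨y, hy, rfl⟩ c d hc hd hcd
    refine ⟨_, hconv hx hy hc hd hcd, funext fun t => ?_⟩
    simp only [φ, Pi.add_apply, Pi.smul_apply, smul_eq_mul, dotProduct_add, dotProduct_smul]
    linear_combination (-b t) * hcd
  obtain ⟨f, c, d, hfc, hcd, hfd⟩ := geometric_hahn_banach_compact_closed hφ hφc
    (convex_Ici (0 : S → ℝ)) isClosed_Ici (by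
      rw [Set.disjoint_left]
      rintro _ ⟨z, hz, rfl⟩ h
      refine hS.subset ⟨hz, mem_iInter₂.2 fun t ht => ?_⟩
      exact sub_nonneg.1 (h ⟨t, ht⟩))
  obtain ⟨w, hw⟩ := f.exists_eq_dotProduct
  have hd : d < 0 := by simpa using hfd 0 self_mem_Ici
  have hw0 : ∀ t, 0 ≤ w t := fun t => by
    by_contra! h
    have := hfd (Pi.single t (d / w t)) (by
      simpa [Pi.single_nonneg] using (div_pos_of_neg_of_neg hd h).le)
    rw [hw, single_dotProduct, div_mul_cancel₀ _ h.ne] at this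
    exact lt_irrefl _ this
  refine ⟨S, fun t => if h : t ∈ S then w ⟨t, h⟩ else 0, fun t ht => by simp [ht, hw0], ?_⟩
  intro z hz
  have h := (hfc _ ⟨z, hz, rfl⟩).trans (hcd.trans hd)
  rw [hw] at h
  rw [sum_dotProduct, ← Finset.sum_coe_sort S, ← Finset.sum_coe_sort S, ← sub_neg,
    ← Finset.sum_sub_distrib]
  refine lt_of_eq_of_lt (Finset.sum_congr rfl fun t _ => ?_) h
  simp [φ]
  ring

theorem inv_ofReal_le_dualNorm {n : ℕ} (p : Seminorm ℝ (Fin n → ℝ)) {u s : Fin n → ℝ}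
    (hps : 0 < p s) (hus : u ⬝ᵥ s ≤ -1) : (ENNReal.ofReal (p s))⁻¹ ≤ dualNorm p u := by
  rw [← ENNReal.ofReal_inv_of_pos hps]
  refine le_iSup₂_of_le ((p s)⁻¹ • s) (by simp [map_smul_eq_mul, abs_of_pos hps, hps.ne'])
    (ENNReal.ofReal_le_ofReal ?_)
  change (p s)⁻¹ ≤ |u ⬝ᵥ ((p s)⁻¹ • s)|
  rw [dotProduct_smul, smul_eq_mul, abs_mul, abs_of_pos (inv_pos.2 hps)]
  exact le_mul_of_one_le_right (inv_pos.2 hps).le (le_abs.2 (Or.inr (by linarith)))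

/-- A compact index set whose vectors have a convex hull missing the origin yields a consistent
right-hand side at which the Hoffman quotient of the origin is at least `‖u‖_*⁻¹`. -/
theorem exists_inv_dualNorm_le_quotient {n : ℕ} {T : Type*} [MetricSpace T] [CompactSpace T]
    {a : T → (Fin n → ℝ)} (ha : Continuous a)
    (p : Seminorm ℝ (Fin n → ℝ)) (hp : ∀ x, p x = 0 → x = 0) {J : Set T} (hJ : IsCompact J)
    (h0 : (0 : Fin n → ℝ) ∉ convexHull ℝ (a '' J)) {u : Fin n → ℝ}
    (hu : u ∈ convexHull ℝ (a '' J)) :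
    ∃ b : C(T, ℝ), (feas a b).Nonempty ∧ (dualNorm p u)⁻¹ ≤
      pDist p 0 (feas a b) / Metric.infEDist b {b' : C(T, ℝ) | 0 ∈ feas a b'} := by
  obtain ⟨z, hz⟩ := (hJ.image ha).exists_dotProduct_le_neg_one h0
  let b : C(T, ℝ) := ⟨fun t => max (-1) (a t ⬝ᵥ z),
    continuous_const.max (ha.dotProduct continuous_const)⟩
  refine ⟨b, ⟨z, fun t => le_max_right _ _⟩, ?_⟩
  have hdist : Metric.infEDist b {b' : C(T, ℝ) | 0 ∈ feas a b'} ≤ 1 := by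
    refine (Metric.infEDist_le_edist_of_mem (y := b + 1) fun t => ?_).trans ?_
    · have : -1 ≤ b t := le_max_left _ _
      simp only [Pi.zero_apply, mul_zero, Finset.sum_const_zero, ContinuousMap.add_apply,
        ContinuousMap.one_apply]
      linarith
    · rw [edist_dist, ← ENNReal.ofReal_one]
      refine ENNReal.ofReal_le_ofReal ((ContinuousMap.dist_le zero_le_one).2 fun t => ?_)
      simp
  have hpd : (dualNorm p u)⁻¹ ≤ pDist p 0 (feas a b) := by
    refine le_iInf₂ fun s hs => ?_
    have hus : u ⬝ᵥ s ≤ -1 := by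
      refine convexHull_min (t := {u | u ⬝ᵥ s ≤ -1}) ?_ ?_ hu
      · rintro _ ⟨t, ht, rfl⟩
        have : b t = -1 := max_eq_left (hz _ ⟨t, ht, rfl⟩)
        exact this ▸ hs t
      · exact convex_halfSpace_le ⟨fun _ _ => add_dotProduct _ _ _,
          fun _ _ => smul_dotProduct _ _ _⟩ _
    have hps : 0 < p s := (apply_nonneg p s).lt_of_ne fun h => by
      rw [hp s h.symm, dotProduct_zero] at hus
      linarith
    rw [zero_sub, map_neg_eq_map]
    exact ENNReal.inv_le_iff_inv_le.1 (inv_ofReal_le_dualNorm p hps hus)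
  calc (dualNorm p u)⁻¹ ≤ pDist p 0 (feas a b) / 1 := by rwa [div_one]
    _ ≤ _ := ENNReal.div_le_div_left hdist _

/-- If `r` is below the distance from `x` to a nonempty feasible set, and no constraint is
violated at `x` by more than `δ`, then some finite index set whose vectors have a convex hull
missing the origin is at dual distance at most `δ / r` from it. -/
theorem exists_finset_dualDist0_le {n : ℕ} {T : Type*} [TopologicalSpace T]
    {a : T → (Fin n → ℝ)} (p : Seminorm ℝ (Fin n → ℝ)) (hp : ∀ x, p x = 0 → x = 0)
    {b : C(T, ℝ)} (hb : (feas a b).Nonempty) {x : Fin n → ℝ} {r δ : ℝ} (hr : 0 < r)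
    (hrd : ENNReal.ofReal r < pDist p x (feas a b)) (hδ : ∀ t, a t ⬝ᵥ x - b t ≤ δ) :
    0 < δ ∧ ∃ S : Finset T, (0 : Fin n → ℝ) ∉ convexHull ℝ (a '' S) ∧
      dualDist0 p (convexHull ℝ (a '' S)) ≤ ENNReal.ofReal (δ / r) := by
  obtain ⟨z, hz⟩ := hb
  have hconv : Convex ℝ {z | p (x - z) ≤ r} := by
    have : {z | p (x - z) ≤ r} = p.closedBall x r := by
      ext z
      rw [Seminorm.mem_closedBall, map_sub_rev]
      rfl
    exact this ▸ p.convex_closedBall x r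
  obtain ⟨S₀, w₀, hw₀, hpos⟩ := exists_conic_combination_pos (a := a) (b := b)
    (p.isCompact_setOf_sub_le hp x r) hconv fun y hy => by
      by_contra! h
      exact (hrd.trans_le (iInf₂_le y h)).not_ge (ENNReal.ofReal_le_ofReal hy)
  obtain ⟨S, w, hw, hwa, hwb, h0⟩ :=
    exists_conic_combination_zero_notMem_convexHull (b := b) hz S₀ w₀ hw₀
  rw [← hwa] at hpos
  set u := ∑ t ∈ S, w t • a t with hu
  set Λ := ∑ t ∈ S, w t with hΛ
  have hres : u ⬝ᵥ x - ∑ t ∈ S, w t * b t ≤ Λ * δ := by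
    rw [hu, hΛ, sum_dotProduct, ← Finset.sum_sub_distrib, Finset.sum_mul]
    refine Finset.sum_le_sum fun t ht => ?_
    rw [smul_dotProduct, smul_eq_mul, ← mul_sub]
    exact mul_le_mul_of_nonneg_left (hδ t) (hw t ht)
  have hball : ∀ y, p y ≤ 1 → r * (u ⬝ᵥ y) < Λ * δ := fun y hy => by
    have h := hpos (x - r • y) (by
      simpa [map_smul_eq_mul, abs_of_pos hr] using mul_le_of_le_one_right hr.le hy)
    rw [dotProduct_sub, dotProduct_smul, smul_eq_mul] at h
    linarith
  have hΛδ : 0 < Λ * δ := by simpa using hball 0 (by simp)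
  have hΛ0 : 0 < Λ := (Finset.sum_nonneg hw).lt_of_ne (left_ne_zero_of_mul hΛδ.ne').symm
  refine ⟨pos_of_mul_pos_right hΛδ hΛ0.le, S, h0, ?_⟩
  have hmem : Λ⁻¹ • u ∈ convexHull ℝ (a '' S) := by
    rw [hu, Finset.smul_sum]
    simp only [smul_smul]
    refine (convex_convexHull ℝ _).sum_mem (fun t ht => ?_) ?_ fun t ht =>
      subset_convexHull ℝ _ ⟨t, ht, rfl⟩
    · exact mul_nonneg (inv_pos.2 hΛ0).le (hw t ht)
    · rw [← Finset.mul_sum, inv_mul_cancel₀ hΛ0.ne']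
  refine iInf₂_le_of_le _ hmem (iSup₂_le fun y hy => ENNReal.ofReal_le_ofReal ?_)
  change |(Λ⁻¹ • u) ⬝ᵥ y| ≤ δ / r
  rw [smul_dotProduct, smul_eq_mul, abs_mul, abs_of_pos (inv_pos.2 hΛ0), inv_mul_le_iff₀ hΛ0,
    ← mul_div_assoc, le_div_iff₀ hr]
  have h₁ := hball y hy
  have h₂ := hball (-y) (by rwa [map_neg_eq_map])
  rw [dotProduct_neg] at h₂
  rcases abs_cases (u ⬝ᵥ y) with ⟨h, _⟩ | ⟨h, _⟩ <;> rw [h] <;> linarith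

/-- Theorem `Th_hof:global`. `T` a compact metric space, `t ↦ a_t`
continuous, `p` an arbitrary norm on `ℝⁿ`, `C(T,ℝ)` with the sup norm. The global Hoffman
constant `Hof F = sup_{b ∈ dom F, x ∈ ℝⁿ} d(x, F(b)) / d(b, F⁻¹(x))` satisfies
`Hof F = sup { d_*(0ₙ, conv{a_t : t ∈ J})⁻¹ : J ⊆ T compact, 0ₙ ∉ conv{a_t : t ∈ J} }`
(conventions: `d(z,∅) = +∞`, `1/+∞ = 0`, `0/0 = 0`, `sup ∅ = 0`). -/
theorem global_hoffman_constant_semiinfinite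
    {n : ℕ} {T : Type*} [MetricSpace T] [CompactSpace T]
    (a : T → (Fin n → ℝ)) (ha : Continuous a)
    (p : Seminorm ℝ (Fin n → ℝ)) (hp : ∀ x, p x = 0 → x = 0) :
    (⨆ (b : C(T, ℝ)) (_ : (feas a b).Nonempty) (x : Fin n → ℝ),
        pDist p x (feas a b) / infEdist b {b' : C(T, ℝ) | x ∈ feas a b'})
    =
    ⨆ (J : Set T) (_ : IsCompact J ∧ (0 : Fin n → ℝ) ∉ convexHull ℝ (a '' J)),
      (dualDist0 p (convexHull ℝ (a '' J)))⁻¹ := by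
  apply le_antisymm
  · refine iSup₂_le fun b hb => iSup_le fun x => ENNReal.div_le_of_le_mul ?_
    change _ ≤ _ * Metric.infEDist b {b' : C(T, ℝ) | x ∈ feas a b'}
    set D := Metric.infEDist b {b' : C(T, ℝ) | x ∈ feas a b'}
    have hDtop : D ≠ ⊤ :=
      ((Metric.infEDist_le_edist_of_mem (x := b)
        (s := {b' : C(T, ℝ) | x ∈ feas a b'})
        (y := ⟨fun t => a t ⬝ᵥ x, ha.dotProduct continuous_const⟩) fun t => le_rfl).trans_lt
          (edist_lt_top _ _)).ne
    have hδ : ∀ t, a t ⬝ᵥ x - b t ≤ D.toReal := fun t => by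
      refine (ENNReal.ofReal_le_iff_le_toReal hDtop).1 (Metric.le_infEDist.2 fun b' hb' => ?_)
      rw [edist_dist]
      refine ENNReal.ofReal_le_ofReal (le_trans ?_ (ContinuousMap.dist_apply_le_dist t))
      rw [dist_comm, Real.dist_eq]
      exact (sub_le_sub_right (hb' t) _).trans (le_abs_self _)
    refine ENNReal.le_of_forall_nnreal_lt fun r hr => ?_
    rcases eq_zero_or_pos r with rfl | hr0
    · simp
    obtain ⟨hδ0, S, h0, hS⟩ := exists_finset_dualDist0_le p hp hb (r := r)
      (NNReal.coe_pos.2 hr0) (by rwa [ENNReal.ofReal_coe_nnreal]) hδ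
    have hrpos : (0 : ℝ) < r := NNReal.coe_pos.2 hr0
    calc (r : ℝ≥0∞) = (ENNReal.ofReal (D.toReal / r))⁻¹ * D := by
          rw [← ENNReal.ofReal_inv_of_pos (div_pos hδ0 hrpos)]
          nth_rewrite 2 [← ENNReal.ofReal_toReal hDtop]
          rw [← ENNReal.ofReal_mul (by positivity), inv_div, div_mul_cancel₀ _ hδ0.ne',
            ENNReal.ofReal_coe_nnreal]
      _ ≤ _ := by
          gcongr
          exact le_iSup₂_of_le (S : Set T) ⟨S.finite_toSet.isCompact, h0⟩ (ENNReal.inv_le_inv.2 hS)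
  · refine iSup₂_le fun J ⟨hJ, h0⟩ => ?_
    simp only [dualDist0, ENNReal.inv_iInf]
    refine iSup₂_le fun u hu => ?_
    obtain ⟨b, hb, hle⟩ := exists_inv_dualNorm_le_quotient ha p hp hJ h0 hu
    exact le_iSup₂_of_le b hb (le_iSup_of_le 0 hle)
end

section
/- Let b̄ ∈ dom F and assume the system σ(b̄) is locally polyhedral (LOP), i.e. D(F(b̄),x) = A(x)° for every x ∈ F(b̄). Then Hof F(b̄) = sup_{x ∈ E(b̄)} clm F(b̄,x) = sup_{x ∈ E(b̄)} sup_{D ∈ D(x)} d_*(0ₙ, conv{a_t : t ∈ D})⁻¹, where E(b̄) is the set of extreme points of F(b̄) ∩ span{a_t : t ∈ T}, and D(x) is the family of subsets D ⊆ T(x) such that the system { a_t'd = 1 for t ∈ D, a_t'd < 1 for t ∈ T(x) \ D } has a solution d ∈ ℝⁿ. -/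
open Filter Set EMetric
open scoped Topology ENNReal NNReal

/-- The set of active indices `T(x) = {t ∈ T : a_t'x = b̄_t}` at a point `x`. -/
def activeIdx {n : ℕ} {T : Type*} [TopologicalSpace T]
    (a : T → (Fin n → ℝ)) (bbar : C(T, ℝ)) (x : Fin n → ℝ) : Set T :=
  {t : T | (∑ i, a t i * x i) = bbar t}

/-- The convex conical hull `cone S` (containing `0ₙ`). -/
def coneHull {n : ℕ} (S : Set (Fin n → ℝ)) : Set (Fin n → ℝ) :=
  insert 0 {x | ∃ c : ℝ, 0 ≤ c ∧ ∃ y ∈ convexHull ℝ S, x = c • y}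

/-- The negative polar `K° = {u : k'u ≤ 0 for all k ∈ K}`. -/
def negPolar {n : ℕ} (K : Set (Fin n → ℝ)) : Set (Fin n → ℝ) :=
  {u | ∀ k ∈ K, (∑ i, k i * u i) ≤ 0}

/-- The cone of feasible directions of `F(b̄)` at `x`. -/
def feasDirs {n : ℕ} {T : Type*} [TopologicalSpace T]
    (a : T → (Fin n → ℝ)) (bbar : C(T, ℝ)) (x : Fin n → ℝ) : Set (Fin n → ℝ) :=
  {d | ∃ ε : ℝ, 0 < ε ∧ ∀ α ∈ Set.Icc (0 : ℝ) ε, x + α • d ∈ feas a bbar}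

/-- The family `D(x)` of subsets `D ⊆ T(x)` such that the system
`{a_t'd = 1 (t ∈ D), a_t'd < 1 (t ∈ T(x) \ D)}` is consistent in `d ∈ ℝⁿ`. -/
def Dfam {n : ℕ} {T : Type*} [TopologicalSpace T]
    (a : T → (Fin n → ℝ)) (bbar : C(T, ℝ)) (x : Fin n → ℝ) : Set (Set T) :=
  {D | D ⊆ activeIdx a bbar x ∧ ∃ d : Fin n → ℝ,
      (∀ t ∈ D, (∑ i, a t i * d i) = 1) ∧
      (∀ t ∈ activeIdx a bbar x \ D, (∑ i, a t i * d i) < 1)}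

/-- The set `E(b̄)` of extreme points of `F(b̄) ∩ span{a_t : t ∈ T}`. -/
def Eset {n : ℕ} {T : Type*} [TopologicalSpace T]
    (a : T → (Fin n → ℝ)) (bbar : C(T, ℝ)) : Set (Fin n → ℝ) :=
  Set.extremePoints ℝ (feas a bbar ∩ (Submodule.span ℝ (Set.range a) : Set (Fin n → ℝ)))

/-- The calmness modulus of `F` at `(b̄, x̄)`:
`clm F(b̄,x̄) = limsup_{(b,x) → (b̄,x̄), x ∈ F(b)} d(x, F(b̄)) / ‖b − b̄‖_∞`. -/
noncomputable def clmF {n : ℕ} {T : Type*} [TopologicalSpace T] [CompactSpace T]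
    (a : T → (Fin n → ℝ)) (p : Seminorm ℝ (Fin n → ℝ))
    (bbar : C(T, ℝ)) (xbar : Fin n → ℝ) : ℝ≥0∞ :=
  Filter.limsup
    (fun q : C(T, ℝ) × (Fin n → ℝ) => pDist p q.2 (feas a bbar) / edist q.1 bbar)
    (𝓝 (bbar, xbar) ⊓ 𝓟 {q : C(T, ℝ) × (Fin n → ℝ) | q.2 ∈ feas a q.1})

/-- The Hoffman modulus of `F` at `b̄ ∈ dom F`:
`Hof F(b̄) = sup_{x ∈ ℝⁿ} d(x, F(b̄)) / d(b̄, F⁻¹(x))`. -/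
noncomputable def hofF {n : ℕ} {T : Type*} [TopologicalSpace T] [CompactSpace T]
    (a : T → (Fin n → ℝ)) (p : Seminorm ℝ (Fin n → ℝ)) (bbar : C(T, ℝ)) : ℝ≥0∞ :=
  ⨆ x : Fin n → ℝ, pDist p x (feas a bbar) / infEdist bbar {b : C(T, ℝ) | x ∈ feas a b}

/-- A continuous function `h` that lies below `c` where the nonnegative function `s` vanishes is
uniformly below `c` after subtracting a large multiple of `s`. -/
lemma IsCompact.eventually_forall_sub_mul_lt {T : Type*} [TopologicalSpace T] {S : Set T}
    (hS : IsCompact S) {s h : T → ℝ} (hs : Continuous s) (hh : Continuous h)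
    (hs0 : ∀ t ∈ S, 0 ≤ s t) {c : ℝ} (hc : ∀ t ∈ S, s t = 0 → h t < c) :
    ∀ᶠ l : ℝ in atTop, ∀ t ∈ S, h t - l * s t < c := by
  have hK : IsCompact (S ∩ {t | c ≤ h t}) :=
    hS.inter_right (isClosed_le continuous_const hh)
  rcases (S ∩ {t | c ≤ h t}).eq_empty_or_nonempty with hE | hE
  · filter_upwards [eventually_ge_atTop 0] with l hl t ht
    have h1 : ¬ c ≤ h t := fun h2 => (hE ▸ (⟨ht, h2⟩ : t ∈ S ∩ {t | c ≤ h t}) : t ∈ (∅ : Set T))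
    nlinarith [mul_nonneg hl (hs0 t ht)]
  · obtain ⟨t1, ht1, hmin⟩ := hK.exists_isMinOn hE hs.continuousOn
    obtain ⟨t2, -, hmax⟩ := hK.exists_isMaxOn hE hh.continuousOn
    have hpos : 0 < s t1 := (hs0 t1 ht1.1).lt_of_ne'
      fun h0 => absurd (hc t1 ht1.1 h0) (not_lt.2 ht1.2)
    filter_upwards [eventually_ge_atTop 0, eventually_gt_atTop ((h t2 - c) / s t1)]
      with l hl hl2 t ht
    by_cases hct : c ≤ h t
    · have h1 : s t1 ≤ s t := hmin ⟨ht, hct⟩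
      have h2 : h t ≤ h t2 := hmax ⟨ht, hct⟩
      rw [div_lt_iff₀ hpos] at hl2
      nlinarith [mul_le_mul_of_nonneg_left h1 hl]
    · nlinarith [mul_nonneg hl (hs0 t ht)]

namespace Seminorm

variable {n : ℕ} (p : Seminorm ℝ (Fin n → ℝ))

lemma continuous_pi_fin : Continuous p :=
  p.convexOn.locallyLipschitz.continuous

lemma exists_mul_norm_le (hp : ∀ x, p x = 0 → x = 0) :
    ∃ c : ℝ, 0 < c ∧ ∀ x, c * ‖x‖ ≤ p x := by
  rcases (Metric.sphere (0 : Fin n → ℝ) 1).eq_empty_or_nonempty with hE | hE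
  · refine ⟨1, one_pos, fun x => ?_⟩
    by_cases hx : x = 0
    · simp [hx]
    · have : ‖x‖⁻¹ • x ∈ Metric.sphere (0 : Fin n → ℝ) 1 := by
        simp [norm_smul, inv_mul_cancel₀ (norm_ne_zero_iff.2 hx)]
      simp [hE] at this
  · obtain ⟨u, hu, hmin⟩ := (isCompact_sphere (0 : Fin n → ℝ) 1).exists_isMinOn hE
      p.continuous_pi_fin.continuousOn
    have hu1 : ‖u‖ = 1 := by simpa using hu
    refine ⟨p u, (apply_nonneg p u).lt_of_ne' fun h => ?_, fun x => ?_⟩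
    · simp [hp u h] at hu1
    · by_cases hx : x = 0
      · simp [hx]
      · have hx' : 0 < ‖x‖ := norm_pos_iff.2 hx
        have h1 : p u ≤ p (‖x‖⁻¹ • x) := hmin (show ‖x‖⁻¹ • x ∈ Metric.sphere (0 : Fin n → ℝ) 1 by
          simp [norm_smul, inv_mul_cancel₀ hx'.ne'])
        rw [map_smul_eq_mul, Real.norm_of_nonneg (inv_nonneg.2 hx'.le), inv_mul_eq_div,
          le_div_iff₀ hx'] at h1
        exact h1

/-- A continuous function on a nonempty closed set attains its minimum if it dominates a
positive multiple of the `p`-distance to a point. -/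
lemma exists_isMinOn_of_le (hp : ∀ x, p x = 0 → x = 0) {S : Set (Fin n → ℝ)} (hS : IsClosed S)
    (hne : S.Nonempty) {φ : (Fin n → ℝ) → ℝ} (hφ : Continuous φ) (d : Fin n → ℝ) {r : ℝ}
    (hle : ∀ e, p (e - d) ≤ r * φ e) (hr : 0 ≤ r) : ∃ e ∈ S, IsMinOn φ S e := by
  obtain ⟨s0, hs0⟩ := hne
  obtain ⟨c, hc, hcp⟩ := p.exists_mul_norm_le hp
  have hcl : IsClosed (S ∩ {e | φ e ≤ φ s0}) := hS.inter (isClosed_le hφ continuous_const)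
  have hsub : S ∩ {e | φ e ≤ φ s0} ⊆ Metric.closedBall d (r * φ s0 / c) := by
    rintro e ⟨-, he⟩
    rw [mem_closedBall_iff_norm, le_div_iff₀ hc, mul_comm]
    exact (hcp _).trans ((hle e).trans (mul_le_mul_of_nonneg_left he hr))
  obtain ⟨e, he, hmin⟩ := ((isCompact_closedBall d _).of_isClosed_subset hcl hsub).exists_isMinOn
    ⟨s0, hs0, le_refl (φ s0)⟩ hφ.continuousOn
  refine ⟨e, he.1, fun x hx => ?_⟩
  rcases le_total (φ x) (φ s0) with h | h
  · exact hmin ⟨hx, h⟩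
  · exact he.2.trans h

lemma exists_dotProduct_eq (x : Fin n → ℝ) :
    ∃ g : Fin n → ℝ, g ⬝ᵥ x = p x ∧ ∀ y, |g ⬝ᵥ y| ≤ p y := by
  by_cases hx : x = 0
  · exact ⟨0, by simp [hx], by simp⟩
  obtain ⟨f, hf, hfp⟩ := exists_extension_of_le_sublinear
    (LinearPMap.mkSpanSingleton (K := ℝ) (σ := RingHom.id ℝ) x (p x) hx) p
    (fun c hc y => by rw [map_smul_eq_mul, Real.norm_of_nonneg hc.le])
    (fun y z => map_add_le_add p y z) (by
      rintro ⟨y, hy⟩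
      obtain ⟨c, rfl⟩ := Submodule.mem_span_singleton.1 hy
      erw [LinearPMap.mkSpanSingleton'_apply]
      simp only [map_smul_eq_mul, RingHom.id_apply, smul_eq_mul]
      exact mul_le_mul_of_nonneg_right (Real.le_norm_self c) (apply_nonneg p x))
  have hrep : ∀ y, (dotProductEquiv ℝ (Fin n)).symm f ⬝ᵥ y = f y := fun y => by
    rw [← dotProductEquiv_apply_apply, LinearEquiv.apply_symm_apply]
  refine ⟨(dotProductEquiv ℝ (Fin n)).symm f, ?_, fun y => ?_⟩
  · rw [hrep]
    have := hf ⟨x, Submodule.mem_span_singleton_self x⟩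
    erw [LinearPMap.mkSpanSingleton'_apply_self] at this
    exact this
  · rw [hrep]
    exact p.abs_le_of_le hfp y

end Seminorm

section DualNorm

variable {n : ℕ} {p : Seminorm ℝ (Fin n → ℝ)}

lemma dualNorm_le_ofReal {u : Fin n → ℝ} {ρ : ℝ} (hρ : 0 ≤ ρ) (h : ∀ x, |u ⬝ᵥ x| ≤ ρ * p x) :
    dualNorm p u ≤ ENNReal.ofReal ρ := by
  refine iSup₂_le fun x hx => ENNReal.ofReal_le_ofReal ((h x).trans ?_)
  simpa using mul_le_mul_of_nonneg_left hx hρ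

lemma ofReal_dotProduct_le (hp : ∀ x, p x = 0 → x = 0) (u x : Fin n → ℝ) :
    ENNReal.ofReal (u ⬝ᵥ x) ≤ dualNorm p u * ENNReal.ofReal (p x) := by
  rcases (apply_nonneg p x).eq_or_lt with h | h
  · simp [hp x h.symm]
  have h1 : ENNReal.ofReal |u ⬝ᵥ ((p x)⁻¹ • x)| ≤ dualNorm p u := by
    refine le_iSup₂_of_le ((p x)⁻¹ • x) ?_ le_rfl
    rw [map_smul_eq_mul, Real.norm_of_nonneg (inv_nonneg.2 h.le), inv_mul_cancel₀ h.ne']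
  calc ENNReal.ofReal (u ⬝ᵥ x)
      ≤ ENNReal.ofReal (|u ⬝ᵥ ((p x)⁻¹ • x)| * p x) := by
        apply ENNReal.ofReal_le_ofReal
        rw [dotProduct_smul, smul_eq_mul, abs_mul, abs_of_pos (inv_pos.2 h), mul_right_comm,
          inv_mul_cancel₀ h.ne', one_mul]
        exact le_abs_self _
    _ = ENNReal.ofReal |u ⬝ᵥ ((p x)⁻¹ • x)| * ENNReal.ofReal (p x) :=
        ENNReal.ofReal_mul (abs_nonneg _)
    _ ≤ _ := by gcongr

/-- A convex set at positive dual distance from the origin is separated from it, with the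
expected rate, by a primal direction. -/
lemma exists_separating_direction (hp : ∀ x, p x = 0 → x = 0) {K : Set (Fin n → ℝ)}
    (hK : Convex ℝ K) (hne : K.Nonempty) {ρ : ℝ} (hρ : 0 < ρ)
    (hKρ : ∀ w ∈ K, ENNReal.ofReal ρ ≤ dualNorm p w) :
    ∃ e : Fin n → ℝ, 0 < p e ∧ ∀ w ∈ K, ρ * p e ≤ w ⬝ᵥ e := by
  set U : Set (Fin n → ℝ) := {w | ∃ σ, 0 ≤ σ ∧ σ < ρ ∧ ∀ x, |w ⬝ᵥ x| ≤ σ * p x} with hU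
  have hUconv : Convex ℝ U := by
    rintro v ⟨σ, hσ0, hσ, hv⟩ w ⟨τ, hτ0, hτ, hw⟩ α β hα hβ hαβ
    refine ⟨α * σ + β * τ, by positivity, ?_, fun x => ?_⟩
    · have : α * (ρ - σ) + β * (ρ - τ) > 0 := by
        rcases hα.eq_or_lt with h | h
        · have : β = 1 := by linarith
          subst this; subst h; linarith
        · have := mul_pos h (sub_pos.2 hσ)
          have := mul_nonneg hβ (sub_pos.2 hτ).le
          linarith
      have h2 : (α + β) * ρ = ρ := by rw [hαβ, one_mul]
      linarith
    · rw [add_dotProduct, smul_dotProduct, smul_dotProduct, smul_eq_mul, smul_eq_mul]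
      refine (abs_add_le _ _).trans ?_
      rw [abs_mul, abs_mul, abs_of_nonneg hα, abs_of_nonneg hβ]
      nlinarith [mul_le_mul_of_nonneg_left (hv x) hα, mul_le_mul_of_nonneg_left (hw x) hβ]
  have hUopen : IsOpen U := by
    obtain ⟨c, hc, hcp⟩ := p.exists_mul_norm_le hp
    rw [Metric.isOpen_iff]
    rintro w ⟨σ, hσ0, hσ, hw⟩
    refine ⟨(ρ - σ) / 2 * c / (n + 1), by have := sub_pos.2 hσ; positivity, fun v hv => ?_⟩
    refine ⟨(σ + ρ) / 2, by linarith, by linarith, fun x => ?_⟩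
    have hvw : ‖v - w‖ * (n + 1) ≤ (ρ - σ) / 2 * c := by
      rw [← le_div_iff₀ (by positivity)]
      exact (mem_ball_iff_norm.1 hv).le
    have h1 : |(v - w) ⬝ᵥ x| ≤ (n + 1) * (‖v - w‖ * ‖x‖) := by
      calc |(v - w) ⬝ᵥ x| ≤ ∑ i, |(v - w) i * x i| := Finset.abs_sum_le_sum_abs _ _
        _ ≤ ∑ _i : Fin n, ‖v - w‖ * ‖x‖ := by
          refine Finset.sum_le_sum fun i _ => ?_
          rw [abs_mul]
          exact mul_le_mul (norm_le_pi_norm (v - w) i) (norm_le_pi_norm x i) (abs_nonneg _)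
            (norm_nonneg _)
        _ = n * (‖v - w‖ * ‖x‖) := by simp
        _ ≤ _ := by gcongr; linarith
    have h2 : |v ⬝ᵥ x| ≤ |w ⬝ᵥ x| + |(v - w) ⬝ᵥ x| := by
      have : v ⬝ᵥ x = w ⬝ᵥ x + (v - w) ⬝ᵥ x := by rw [sub_dotProduct]; ring
      rw [this]
      exact abs_add_le _ _
    have h3 := mul_le_mul_of_nonneg_right hvw (norm_nonneg x)
    have h4 := mul_le_mul_of_nonneg_left (hcp x) (by linarith : 0 ≤ (ρ - σ) / 2)
    nlinarith [hw x]
  have hdisj : Disjoint U K := by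
    rw [Set.disjoint_left]
    rintro w ⟨σ, hσ0, hσ, hw⟩ hwK
    exact absurd ((hKρ w hwK).trans (dualNorm_le_ofReal hσ0 hw))
      (not_le.2 ((ENNReal.ofReal_lt_ofReal_iff hρ).2 hσ))
  obtain ⟨f, u, hfU, hfK⟩ := geometric_hahn_banach_open hUconv hUopen hK hdisj
  set e := (dotProductEquiv ℝ (Fin n)).symm (f : (Fin n → ℝ) →ₗ[ℝ] ℝ) with he
  have hrep : ∀ w, f w = w ⬝ᵥ e := fun w => by
    have : dotProductEquiv ℝ (Fin n) e w = f w := by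
      rw [he, LinearEquiv.apply_symm_apply]; rfl
    rw [← this, dotProductEquiv_apply_apply, dotProduct_comm]
  have hu0 : 0 < u := by
    have := hfU 0 ⟨0, le_rfl, hρ, by simp⟩
    simpa using this
  obtain ⟨k, hk⟩ := hne
  have he0 : 0 < p e := by
    refine (apply_nonneg p e).lt_of_ne' fun h => ?_
    have := hfK k hk
    rw [hrep, hp e h, dotProduct_zero] at this
    linarith
  refine ⟨e, he0, fun w hw => ?_⟩
  refine le_trans ?_ ((hfK w hw).trans_eq (hrep w))
  obtain ⟨g, hge, hg⟩ := p.exists_dotProduct_eq e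
  rw [← le_div_iff₀ he0]
  refine le_of_forall_lt_imp_le_of_dense fun σ hσ => ?_
  rcases lt_or_ge σ 0 with h | h
  · exact h.le.trans (by positivity)
  rw [le_div_iff₀ he0]
  have := hfU (σ • g) ⟨σ, h, hσ, fun x => by
    rw [smul_dotProduct, smul_eq_mul, abs_mul, abs_of_nonneg h]
    exact mul_le_mul_of_nonneg_left (hg x) h⟩
  rw [hrep, smul_dotProduct, hge, smul_eq_mul] at this
  exact this.le

end DualNorm

section Homogeneous

variable {n : ℕ} {T : Type*}

/-- The solution set of the homogeneous system `a_t'd ≤ 0`, `t ∈ S`. -/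
def homFeas (a : T → (Fin n → ℝ)) (S : Set T) : Set (Fin n → ℝ) :=
  {d | ∀ t ∈ S, a t ⬝ᵥ d ≤ 0}

/-- The Hoffman modulus of the homogeneous system `a_t'd ≤ 0`, `t ∈ S`: the largest distance to
its solution set of a point violating no inequality by more than `1`. -/
noncomputable def homHof (a : T → (Fin n → ℝ)) (p : Seminorm ℝ (Fin n → ℝ)) (S : Set T) : ℝ≥0∞ :=
  ⨆ (d : Fin n → ℝ) (_ : ∀ t ∈ S, a t ⬝ᵥ d ≤ 1), pDist p d (homFeas a S)

lemma le_pDist_iff {p : Seminorm ℝ (Fin n → ℝ)} {z : Fin n → ℝ} {S : Set (Fin n → ℝ)} {c : ℝ≥0∞} :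
    c ≤ pDist p z S ↔ ∀ s ∈ S, c ≤ ENNReal.ofReal (p (z - s)) :=
  le_iInf₂_iff

lemma pDist_le {p : Seminorm ℝ (Fin n → ℝ)} {z s : Fin n → ℝ} {S : Set (Fin n → ℝ)} (hs : s ∈ S) :
    pDist p z S ≤ ENNReal.ofReal (p (z - s)) :=
  iInf₂_le s hs

lemma pDist_eq_zero_of_mem {p : Seminorm ℝ (Fin n → ℝ)} {z : Fin n → ℝ} {S : Set (Fin n → ℝ)}
    (hz : z ∈ S) : pDist p z S = 0 :=
  le_antisymm ((pDist_le hz).trans (by simp)) bot_le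

variable {a : T → (Fin n → ℝ)} {p : Seminorm ℝ (Fin n → ℝ)} {S : Set T}

lemma smul_mem_homFeas {d : Fin n → ℝ} (hd : d ∈ homFeas a S) {c : ℝ} (hc : 0 ≤ c) :
    c • d ∈ homFeas a S := fun t ht => by
  rw [dotProduct_smul, smul_eq_mul]
  exact mul_nonpos_of_nonneg_of_nonpos hc (hd t ht)

lemma ofReal_mul_pDist_homFeas_le (d : Fin n → ℝ) {c : ℝ} (hc : 0 < c) :
    ENNReal.ofReal c * pDist p d (homFeas a S) ≤ pDist p (c • d) (homFeas a S) := by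
  refine le_pDist_iff.2 fun s hs => ?_
  have h1 : c • d - s = c • (d - c⁻¹ • s) := by
    rw [smul_sub, smul_inv_smul₀ hc.ne']
  rw [h1, map_smul_eq_mul, Real.norm_of_nonneg hc.le, ENNReal.ofReal_mul hc.le]
  gcongr
  exact pDist_le (smul_mem_homFeas hs (inv_nonneg.2 hc.le))

lemma pDist_homFeas_le {d : Fin n → ℝ} {c : ℝ} (hc : 0 < c) (hd : ∀ t ∈ S, a t ⬝ᵥ d ≤ c) :
    pDist p d (homFeas a S) ≤ ENNReal.ofReal c * homHof a p S := by
  have h1 : pDist p (c⁻¹ • d) (homFeas a S) ≤ homHof a p S :=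
    le_iSup₂_of_le (f := fun (d : Fin n → ℝ) (_ : ∀ t ∈ S, a t ⬝ᵥ d ≤ 1) =>
      pDist p d (homFeas a S)) (c⁻¹ • d) (fun t ht => by
        rw [dotProduct_smul, smul_eq_mul, inv_mul_le_iff₀ hc, mul_one]
        exact hd t ht) le_rfl
  have h2 := ofReal_mul_pDist_homFeas_le (p := p) (a := a) (S := S) d (inv_pos.2 hc)
  calc pDist p d (homFeas a S)
      = ENNReal.ofReal c * (ENNReal.ofReal c⁻¹ * pDist p d (homFeas a S)) := by
        rw [← mul_assoc, ← ENNReal.ofReal_mul hc.le, mul_inv_cancel₀ hc.ne', ENNReal.ofReal_one,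
          one_mul]
    _ ≤ _ := by gcongr; exact h2.trans h1

lemma ENNReal.le_of_forall_one_lt_ofReal_mul {X Y : ℝ≥0∞}
    (h : ∀ c : ℝ, 1 < c → X ≤ ENNReal.ofReal c * Y) : X ≤ Y := by
  have ht : Tendsto (fun c : ℝ => ENNReal.ofReal c * Y) (𝓝[>] 1) (𝓝 (ENNReal.ofReal 1 * Y)) :=
    ENNReal.Tendsto.mul_const
      ((ENNReal.continuous_ofReal.tendsto 1).mono_left nhdsWithin_le_nhds) (Or.inl (by simp))
  rw [ENNReal.ofReal_one, one_mul] at ht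
  exact ge_of_tendsto ht (eventually_nhdsWithin_of_forall fun c hc => h c hc)

lemma dotProduct_le_of_mem_convexHull {A : Set (Fin n → ℝ)} {d : Fin n → ℝ} {c : ℝ}
    (h : ∀ v ∈ A, v ⬝ᵥ d ≤ c) {w : Fin n → ℝ} (hw : w ∈ convexHull ℝ A) : w ⬝ᵥ d ≤ c := by
  refine convexHull_min (t := {w | w ⬝ᵥ d ≤ c}) h ?_ hw
  exact convex_halfSpace_le ⟨fun x y => add_dotProduct x y d, fun c x => smul_dotProduct c x d⟩ c

lemma homFeas_subset_negPolar (S : Set T) : homFeas a S ⊆ negPolar (coneHull (a '' S)) := by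
  rintro d hd k (rfl | ⟨c, hc, w, hw, rfl⟩)
  · simp
  · have h1 : w ⬝ᵥ d ≤ 0 := dotProduct_le_of_mem_convexHull (by
      rintro _ ⟨t, ht, rfl⟩
      exact hd t ht) hw
    change (c • w) ⬝ᵥ d ≤ 0
    rw [smul_dotProduct, smul_eq_mul]
    exact mul_nonpos_of_nonneg_of_nonpos hc h1

end Homogeneous

section System

variable {n : ℕ} {T : Type*} [TopologicalSpace T] {a : T → (Fin n → ℝ)}
  {p : Seminorm ℝ (Fin n → ℝ)} {b : C(T, ℝ)}

lemma mem_feas {x : Fin n → ℝ} : x ∈ feas a b ↔ ∀ t, a t ⬝ᵥ x ≤ b t := Iff.rfl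

lemma mem_activeIdx {x : Fin n → ℝ} {t : T} : t ∈ activeIdx a b x ↔ a t ⬝ᵥ x = b t := Iff.rfl

lemma continuous_dotProduct_left (ha : Continuous a) (x : Fin n → ℝ) :
    Continuous fun t => a t ⬝ᵥ x := ha.dotProduct continuous_const

lemma isClosed_activeIdx (ha : Continuous a) (x : Fin n → ℝ) : IsClosed (activeIdx a b x) :=
  isClosed_eq (continuous_dotProduct_left ha x) b.continuous

lemma isClosed_feas : IsClosed (feas a b) := by
  have : feas a b = ⋂ t, {x | a t ⬝ᵥ x ≤ b t} := by
    ext x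
    simp [mem_feas]
  rw [this]
  exact isClosed_iInter fun t =>
    isClosed_le (continuous_const.dotProduct continuous_id) continuous_const

lemma sub_mem_homFeas {y z : Fin n → ℝ} (hy : y ∈ feas a b) :
    y - z ∈ homFeas a (activeIdx a b z) := fun t ht => by
  rw [dotProduct_sub, mem_activeIdx.1 ht]
  linarith [mem_feas.1 hy t]

lemma homHof_mono [CompactSpace T] (ha : Continuous a) {y z : Fin n → ℝ} (hy : y ∈ feas a b)
    (hyz : activeIdx a b y ⊆ activeIdx a b z) :
    homHof a p (activeIdx a b y) ≤ homHof a p (activeIdx a b z) := by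
  refine iSup₂_le fun d hd => ENNReal.le_of_forall_one_lt_ofReal_mul fun c hc => ?_
  obtain ⟨l, hl⟩ := ((isClosed_activeIdx (b := b) ha z).isCompact.eventually_forall_sub_mul_lt
    (continuous_dotProduct_left ha (z - y)) (continuous_dotProduct_left ha d)
    (fun t ht => by
      have := sub_mem_homFeas (z := z) hy t ht
      rw [← neg_sub, dotProduct_neg] at this
      linarith)
    (c := c) (fun t ht h0 => by
      refine (hd t ?_).trans_lt hc
      rw [dotProduct_sub, mem_activeIdx.1 ht] at h0
      rw [mem_activeIdx]
      linarith)).exists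
  refine le_trans ?_ (pDist_homFeas_le (p := p) (zero_lt_one.trans hc)
    (d := d - l • (z - y)) fun t ht => by
      rw [dotProduct_sub, dotProduct_smul, smul_eq_mul]
      exact (hl t ht).le)
  refine le_pDist_iff.2 fun s hs => ?_
  rw [sub_sub, add_comm]
  refine pDist_le fun t ht => ?_
  rw [dotProduct_add, dotProduct_smul, dotProduct_sub, mem_activeIdx.1 ht,
    mem_activeIdx.1 (hyz ht), sub_self, smul_zero, add_zero]
  exact hs t (hyz ht)

lemma homHof_le_clmF [CompactSpace T] (ha : Continuous a) {z : Fin n → ℝ} (hz : z ∈ feas a b) :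
    homHof a p (activeIdx a b z) ≤ clmF a p b z := by
  refine iSup₂_le fun d hd => ENNReal.le_of_forall_one_lt_ofReal_mul fun c hc => ?_
  have hc0 : 0 < c := zero_lt_one.trans hc
  have hev := isCompact_univ.eventually_forall_sub_mul_lt
    (s := fun t => b t - a t ⬝ᵥ z) (b.continuous.sub (continuous_dotProduct_left ha z))
    (continuous_dotProduct_left ha d) (fun t _ => sub_nonneg.2 (hz t))
    (c := c) (fun t _ h0 => (hd t (by rw [mem_activeIdx]; linarith)).trans_lt hc)
  set φ : ℝ → C(T, ℝ) × (Fin n → ℝ) :=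
    fun l => (b + ContinuousMap.const T (l⁻¹ * c), z + l⁻¹ • d) with hφ
  have hlim : Tendsto φ atTop (𝓝 (b, z)) := by
    have h0 : Continuous fun α : ℝ =>
        ((b + ContinuousMap.const T (α * c), z + α • d) : C(T, ℝ) × (Fin n → ℝ)) := by
      have : Continuous fun α : ℝ => (ContinuousMap.const T (α * c) : C(T, ℝ)) :=
        ContinuousMap.continuous_const'.comp (continuous_id.mul continuous_const)
      fun_prop
    have h1 := (h0.tendsto 0).comp tendsto_inv_atTop_zero
    have h2 : (ContinuousMap.const T (0 : ℝ)) = 0 := rfl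
    simpa [hφ, Function.comp_def, h2] using h1
  have hmem : ∀ᶠ l in atTop, φ l ∈ {q : C(T, ℝ) × (Fin n → ℝ) | q.2 ∈ feas a q.1} := by
    filter_upwards [hev, eventually_gt_atTop 0] with l hl hl0 t
    change a t ⬝ᵥ (z + l⁻¹ • d) ≤ b t + l⁻¹ * c
    rw [dotProduct_add, dotProduct_smul, smul_eq_mul]
    have h1 := mul_le_mul_of_nonneg_left (hl t (mem_univ t)).le (inv_nonneg.2 hl0.le)
    rw [mul_sub, inv_mul_cancel_left₀ hl0.ne'] at h1
    linarith
  have hle : Filter.map φ atTop ≤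
      𝓝 (b, z) ⊓ 𝓟 {q : C(T, ℝ) × (Fin n → ℝ) | q.2 ∈ feas a q.1} :=
    le_inf hlim (by simpa using hmem)
  have hratio : ∀ᶠ q in Filter.map φ atTop,
      pDist p d (homFeas a (activeIdx a b z)) / ENNReal.ofReal c ≤
        pDist p q.2 (feas a b) / edist q.1 b := by
    rw [eventually_map]
    filter_upwards [eventually_gt_atTop 0] with l hl0
    have hli : 0 < l⁻¹ := inv_pos.2 hl0
    have h1 : edist (φ l).1 b ≤ ENNReal.ofReal l⁻¹ * ENNReal.ofReal c := by
      rw [← ENNReal.ofReal_mul hli.le, edist_dist]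
      refine ENNReal.ofReal_le_ofReal ((ContinuousMap.dist_le (by positivity)).2 fun t => ?_)
      simp [hφ, abs_of_pos hl0, abs_of_pos hc0]
    have h2 : ENNReal.ofReal l⁻¹ * pDist p d (homFeas a (activeIdx a b z)) ≤
        pDist p (φ l).2 (feas a b) := by
      refine (ofReal_mul_pDist_homFeas_le d hli).trans (le_pDist_iff.2 fun s hs => ?_)
      have : (φ l).2 - s = l⁻¹ • d - (s - z) := by simp only [hφ]; abel
      rw [this]
      exact pDist_le (sub_mem_homFeas hs)
    calc _ = ENNReal.ofReal l⁻¹ * pDist p d (homFeas a (activeIdx a b z)) /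
          (ENNReal.ofReal l⁻¹ * ENNReal.ofReal c) := by
          rw [ENNReal.mul_div_mul_left _ _ (by simpa using hl0) ENNReal.ofReal_ne_top]
      _ ≤ _ := ENNReal.div_le_div h2 h1
  have hfin : pDist p d (homFeas a (activeIdx a b z)) / ENNReal.ofReal c ≤ clmF a p b z :=
    (le_limsup_of_frequently_le hratio.frequently).trans (limsup_le_limsup_of_le hle)
  rwa [ENNReal.div_le_iff (by simpa using hc0) ENNReal.ofReal_ne_top, mul_comm] at hfin

lemma clmF_le_hofF [CompactSpace T] (z : Fin n → ℝ) : clmF a p b z ≤ hofF a p b := by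
  refine limsup_le_of_le (by isBoundedDefault) ?_
  filter_upwards [mem_inf_of_right (mem_principal_self _)] with q hq
  refine le_iSup_of_le q.2 (ENNReal.div_le_div le_rfl ?_)
  rw [edist_comm]
  exact Metric.infEDist_le_edist_of_mem hq

end System

section HomogeneousModulus

variable {n : ℕ} {T : Type*} [TopologicalSpace T] {a : T → (Fin n → ℝ)}
  {p : Seminorm ℝ (Fin n → ℝ)} {b : C(T, ℝ)}

lemma inv_dualDist0_le_homHof (hp : ∀ x, p x = 0 → x = 0) {z : Fin n → ℝ} {D : Set T}
    (hD : D ∈ Dfam a b z) :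
    (dualDist0 p (convexHull ℝ (a '' D)))⁻¹ ≤ homHof a p (activeIdx a b z) := by
  obtain ⟨hDsub, d, hd1, hdlt⟩ := hD
  have hd : ∀ t ∈ activeIdx a b z, a t ⬝ᵥ d ≤ 1 := fun t ht => by
    by_cases htD : t ∈ D
    · exact (hd1 t htD).le
    · exact (hdlt t ⟨ht, htD⟩).le
  rw [dualDist0, ENNReal.inv_iInf]
  refine iSup_le fun w => ?_
  rw [ENNReal.inv_iInf]
  refine iSup_le fun hw => le_iSup₂_of_le d hd (le_pDist_iff.2 fun s hs => ?_)
  have hwd : 1 ≤ w ⬝ᵥ d := by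
    have := dotProduct_le_of_mem_convexHull (d := -d) (c := -1) (by
      rintro _ ⟨t, ht, rfl⟩
      rw [dotProduct_neg]
      exact neg_le_neg (hd1 t ht).ge) hw
    rw [dotProduct_neg] at this
    linarith
  have hws : w ⬝ᵥ s ≤ 0 := dotProduct_le_of_mem_convexHull (by
    rintro _ ⟨t, ht, rfl⟩
    exact hs t (hDsub ht)) hw
  have h1 : 1 ≤ dualNorm p w * ENNReal.ofReal (p (d - s)) := by
    refine le_trans ?_ (ofReal_dotProduct_le hp w (d - s))
    rw [← ENNReal.ofReal_one, dotProduct_sub]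
    exact ENNReal.ofReal_le_ofReal (by linarith)
  rw [← one_div]
  refine ENNReal.div_le_of_le_mul ?_
  rwa [mul_comm]

lemma homHof_le_iSup_inv_dualDist0 [CompactSpace T] (ha : Continuous a) (hp : ∀ x, p x = 0 → x = 0)
    (z : Fin n → ℝ) :
    homHof a p (activeIdx a b z) ≤
      ⨆ D ∈ Dfam a b z, (dualDist0 p (convexHull ℝ (a '' D)))⁻¹ := by
  set S := activeIdx a b z with hS
  set M := ⨆ D ∈ Dfam a b z, (dualDist0 p (convexHull ℝ (a '' D)))⁻¹ with hM
  refine iSup₂_le fun d hd => le_of_not_gt fun hlt => ?_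
  obtain ⟨r, hMr, hrd⟩ := ENNReal.lt_iff_exists_real_btwn.1 hlt |>.imp fun r h => h.2
  obtain ⟨r₁, -, hMr₁, hr₁r⟩ := ENNReal.lt_iff_exists_real_btwn.1 hMr
  have hr₁ : 0 < r₁ := by
    rw [← ENNReal.ofReal_pos]
    exact bot_le.trans_lt hMr₁
  have hr : 0 < r := by
    rw [← ENNReal.ofReal_pos]
    exact bot_le.trans_lt hMr
  have hrr : r₁ < r := (ENNReal.ofReal_lt_ofReal_iff hr).1 hr₁r
  have hScomp : IsCompact S := (isClosed_activeIdx ha z).isCompact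
  have hSne : S.Nonempty := by
    rw [nonempty_iff_ne_empty]
    intro hSe
    have : pDist p d (homFeas a S) = 0 := pDist_eq_zero_of_mem (by simp [homFeas, hSe])
    simp [this] at hrd
  have hbdd : ∀ e, BddAbove ((fun t => a t ⬝ᵥ e) '' S) := fun e =>
    (hScomp.image (continuous_dotProduct_left ha e)).bddAbove
  set g : (Fin n → ℝ) → ℝ := fun e => sSup ((fun t => a t ⬝ᵥ e) '' S) with hg
  have hgcont : Continuous g := hScomp.continuous_sSup (f := fun e t => a t ⬝ᵥ e)
    ((ha.comp continuous_snd).dotProduct continuous_fst)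
  have hle_g : ∀ e, ∀ t ∈ S, a t ⬝ᵥ e ≤ g e := fun e t ht => le_csSup (hbdd e) ⟨t, ht, rfl⟩
  have hg_le : ∀ e c, (∀ t ∈ S, a t ⬝ᵥ e ≤ c) → g e ≤ c := fun e c h =>
    csSup_le (hSne.image _) (by rintro _ ⟨t, ht, rfl⟩; exact h t ht)
  have hpc := p.continuous_pi_fin
  obtain ⟨e, -, hmin⟩ := p.exists_isMinOn_of_le hp isClosed_univ univ_nonempty
    (φ := fun e => max (g e) 0 + r⁻¹ * p (e - d)) (by fun_prop) d (r := r) (fun e => by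
      rw [mul_add, mul_inv_cancel_left₀ hr.ne']
      have := mul_nonneg hr.le (le_max_right (g e) 0)
      linarith) hr.le
  have hmin' : ∀ x, max (g e) 0 + r⁻¹ * p (e - d) ≤ max (g x) 0 + r⁻¹ * p (x - d) :=
    fun x => hmin (mem_univ x)
  have hG : 0 < g e := by
    by_contra hneg
    have heL : e ∈ homFeas a S := fun t ht => (hle_g e t ht).trans (not_lt.1 hneg)
    have h1 := hmin' d
    rw [sub_self, map_zero, mul_zero, add_zero, max_eq_right (not_lt.1 hneg), zero_add] at h1
    have h2 : r⁻¹ * p (e - d) ≤ 1 := h1.trans (max_le (hg_le d 1 hd) zero_le_one)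
    rw [inv_mul_le_iff₀ hr, mul_one] at h2
    refine absurd (hrd.trans_le (pDist_le heL)) (not_lt.2 (ENNReal.ofReal_le_ofReal ?_))
    rwa [map_sub_rev]
  set D : Set T := {t ∈ S | a t ⬝ᵥ e = g e} with hD
  have hDmem : D ∈ Dfam a b z := by
    refine ⟨fun t ht => ht.1, (g e)⁻¹ • e, fun t ht => ?_, fun t ht => ?_⟩
    · change a t ⬝ᵥ ((g e)⁻¹ • e) = 1
      rw [dotProduct_smul, ht.2, smul_eq_mul, inv_mul_cancel₀ hG.ne']
    · change a t ⬝ᵥ ((g e)⁻¹ • e) < 1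
      rw [dotProduct_smul, smul_eq_mul, inv_mul_lt_iff₀ hG, mul_one]
      exact (hle_g e t ht.1).lt_of_ne fun h => ht.2 ⟨ht.1, h⟩
  have hDne : D.Nonempty := by
    obtain ⟨t, ht, htmax⟩ :=
      hScomp.exists_sSup_image_eq hSne (continuous_dotProduct_left ha e).continuousOn
    exact ⟨t, ht, htmax.symm⟩
  have hρ : ENNReal.ofReal r₁⁻¹ ≤ dualDist0 p (convexHull ℝ (a '' D)) := by
    have h1 : (dualDist0 p (convexHull ℝ (a '' D)))⁻¹ ≤ M :=
      le_iSup₂_of_le (f := fun D (_ : D ∈ Dfam a b z) => (dualDist0 p (convexHull ℝ (a '' D)))⁻¹)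
        D hDmem le_rfl
    rw [ENNReal.ofReal_inv_of_pos hr₁]
    exact ENNReal.inv_le_iff_inv_le.1 (h1.trans hMr₁.le)
  obtain ⟨v, hv0, hv⟩ := exists_separating_direction hp (convex_convexHull ℝ (a '' D))
    ((hDne.image a).convexHull) (inv_pos.2 hr₁) (fun w hw => hρ.trans (iInf₂_le w hw))
  obtain ⟨ρ, hrρ, hρr⟩ := exists_between ((inv_lt_inv₀ hr hr₁).2 hrr)
  have hev := hScomp.eventually_forall_sub_mul_lt (s := fun t => g e - a t ⬝ᵥ e)
    (continuous_const.sub (continuous_dotProduct_left ha e))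
    (continuous_dotProduct_left ha (-v)) (fun t ht => sub_nonneg.2 (hle_g e t ht))
    (c := -(ρ * p v)) (fun t ht h0 => by
      have h1 := hv (a t) (subset_convexHull ℝ _ ⟨t, ⟨ht, by linarith⟩, rfl⟩)
      have h2 := mul_lt_mul_of_pos_right hρr hv0
      rw [dotProduct_neg]
      linarith)
  obtain ⟨l, hl, hl0, hl2⟩ := (hev.and ((eventually_gt_atTop 0).and
    (eventually_gt_atTop (ρ * p v / g e)))).exists
  have hli : 0 < l⁻¹ := inv_pos.2 hl0
  have hg1 : g (e + l⁻¹ • (-v)) ≤ g e - l⁻¹ * (ρ * p v) := hg_le _ _ fun t ht => by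
    have h1 := mul_le_mul_of_nonneg_left (hl t ht).le hli.le
    rw [mul_sub, inv_mul_cancel_left₀ hl0.ne'] at h1
    rw [dotProduct_add, dotProduct_smul, smul_eq_mul]
    linarith
  have hg2 : 0 ≤ g e - l⁻¹ * (ρ * p v) := by
    rw [div_lt_iff₀ hG] at hl2
    rw [sub_nonneg, inv_mul_le_iff₀ hl0]
    exact hl2.le
  have hp1 : p (e + l⁻¹ • (-v) - d) ≤ p (e - d) + l⁻¹ * p v := by
    have : e + l⁻¹ • (-v) - d = (e - d) + l⁻¹ • (-v) := by abel
    rw [this]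
    refine (map_add_le_add p _ _).trans_eq ?_
    rw [map_smul_eq_mul, map_neg_eq_map, Real.norm_of_nonneg hli.le]
  have hmin1 := hmin' (e + l⁻¹ • (-v))
  rw [max_eq_left hG.le] at hmin1
  have hmax := max_le hg1 hg2
  have hp2 := mul_le_mul_of_nonneg_left hp1 (inv_pos.2 hr).le
  have hstrict := mul_lt_mul_of_pos_left (mul_lt_mul_of_pos_right hrρ hv0) hli
  nlinarith

lemma homHof_eq_iSup_inv_dualDist0 [CompactSpace T] (ha : Continuous a) (hp : ∀ x, p x = 0 → x = 0)
    (z : Fin n → ℝ) :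
    homHof a p (activeIdx a b z) =
      ⨆ D ∈ Dfam a b z, (dualDist0 p (convexHull ℝ (a '' D)))⁻¹ :=
  le_antisymm (homHof_le_iSup_inv_dualDist0 ha hp z)
    (iSup₂_le fun _ hD => inv_dualDist0_le_homHof hp hD)

end HomogeneousModulus

section LocallyPolyhedral

variable {n : ℕ} {T : Type*} {a : T → (Fin n → ℝ)}

lemma exists_mem_span_dotProduct_eq (a : T → (Fin n → ℝ)) (y : Fin n → ℝ) :
    ∃ v ∈ Submodule.span ℝ (range a), ∀ t, a t ⬝ᵥ v = a t ⬝ᵥ y := by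
  set e := WithLp.linearEquiv 2 ℝ (Fin n → ℝ)
  obtain ⟨u, hu, w, hw, hy⟩ := Submodule.exists_add_mem_mem_orthogonal
    (K := (Submodule.span ℝ (range a)).comap (e : WithLp 2 (Fin n → ℝ) →ₗ[ℝ] Fin n → ℝ))
    (WithLp.toLp 2 y : EuclideanSpace ℝ (Fin n))
  refine ⟨e u, hu, fun t => ?_⟩
  have h1 : inner ℝ (WithLp.toLp 2 (a t) : EuclideanSpace ℝ (Fin n)) w = 0 :=
    hw _ (Submodule.subset_span ⟨t, rfl⟩)
  have h2 : y = e u + e w := by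
    rw [← map_add]
    exact congrArg e hy
  have h3 : a t ⬝ᵥ e w = 0 := by
    rw [EuclideanSpace.inner_eq_star_dotProduct] at h1
    rw [dotProduct_comm]
    exact (by simpa using h1 : w.ofLp ⬝ᵥ a t = 0)
  rw [h2, dotProduct_add, h3, add_zero]

lemma eq_zero_of_mem_span_of_forall_dotProduct_eq_zero {e : Fin n → ℝ}
    (he : e ∈ Submodule.span ℝ (range a)) (h : ∀ t, a t ⬝ᵥ e = 0) : e = 0 := by
  rw [← dotProduct_self_eq_zero]
  have : Submodule.span ℝ (range a) ≤ LinearMap.ker (dotProductEquiv ℝ (Fin n) e) := by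
    rw [Submodule.span_le]
    rintro _ ⟨t, rfl⟩
    rw [SetLike.mem_coe, LinearMap.mem_ker, dotProductEquiv_apply_apply, dotProduct_comm]
    exact h t
  exact this he

variable [TopologicalSpace T] {p : Seminorm ℝ (Fin n → ℝ)} {b : C(T, ℝ)}

/-- A point of `F(b) ∩ span{a_t}` that is not extreme can be moved, along a direction orthogonal
to its active gradients, to a point where the active gradients span a larger subspace. -/
lemma exists_finrank_lt_of_notMem_Eset
    (hLOP : ∀ x ∈ feas a b, feasDirs a b x = negPolar (coneHull (a '' activeIdx a b x)))
    {y : Fin n → ℝ} (hy : y ∈ feas a b) (hyV : y ∈ Submodule.span ℝ (range a))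
    (hyE : y ∉ Eset a b) :
    ∃ z ∈ feas a b, z ∈ Submodule.span ℝ (range a) ∧ activeIdx a b y ⊆ activeIdx a b z ∧
      Module.finrank ℝ (Submodule.span ℝ (a '' activeIdx a b y)) <
        Module.finrank ℝ (Submodule.span ℝ (a '' activeIdx a b z)) := by
  obtain ⟨e, heV, heT, t₀, ht₀⟩ : ∃ e ∈ Submodule.span ℝ (range a),
      (∀ t ∈ activeIdx a b y, a t ⬝ᵥ e = 0) ∧ ∃ t, 0 < a t ⬝ᵥ e := by
    rw [Eset, mem_extremePoints] at hyE
    push Not at hyE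
    obtain ⟨x₁, hx₁, x₂, hx₂, ⟨α, β, hα, hβ, hαβ, hseg⟩, hne⟩ := hyE ⟨hy, hyV⟩
    have heV : x₂ - x₁ ∈ Submodule.span ℝ (range a) := Submodule.sub_mem _ hx₂.2 hx₁.2
    have heT : ∀ t ∈ activeIdx a b y, a t ⬝ᵥ (x₂ - x₁) = 0 := fun t ht => by
      have h1 := mem_activeIdx.1 ht
      have h2 := mem_feas.1 hx₁.1 t
      have h3 := mem_feas.1 hx₂.1 t
      rw [← hseg, dotProduct_add, dotProduct_smul, dotProduct_smul, smul_eq_mul, smul_eq_mul] at h1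
      have hb : (α + β) * b t = b t := by rw [hαβ, one_mul]
      have h4 : a t ⬝ᵥ x₁ = b t := by
        refine le_antisymm h2 ?_
        by_contra! hlt
        nlinarith [mul_lt_mul_of_pos_left hlt hα, mul_le_mul_of_nonneg_left h3 hβ.le]
      have h5 : a t ⬝ᵥ x₂ = b t := by
        refine le_antisymm h3 ?_
        by_contra! hlt
        nlinarith [mul_lt_mul_of_pos_left hlt hβ, mul_le_mul_of_nonneg_left h2 hα.le]
      rw [dotProduct_sub, h4, h5, sub_self]
    have hx : x₂ - x₁ ≠ 0 := fun h0 => by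
      have h12 : x₂ = x₁ := sub_eq_zero.1 h0
      subst h12
      rw [← add_smul, hαβ, one_smul] at hseg
      exact hne hseg hseg
    obtain ⟨t, ht⟩ : ∃ t, a t ⬝ᵥ (x₂ - x₁) ≠ 0 := by
      by_contra! h
      exact hx (eq_zero_of_mem_span_of_forall_dotProduct_eq_zero heV h)
    rcases ht.lt_or_gt with h | h
    · refine ⟨-(x₂ - x₁), Submodule.neg_mem _ heV, fun t ht => ?_, t, ?_⟩
      · rw [dotProduct_neg, heT t ht, neg_zero]
      · rw [dotProduct_neg]
        linarith
    · exact ⟨x₂ - x₁, heV, heT, t, h⟩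
  set I : Set ℝ := {α | 0 ≤ α ∧ y + α • e ∈ feas a b} with hI
  have hIcl : IsClosed I :=
    isClosed_Ici.inter (isClosed_feas.preimage (by fun_prop : Continuous fun α : ℝ => y + α • e))
  have hIbdd : BddAbove I := by
    refine ⟨(b t₀ - a t₀ ⬝ᵥ y) / (a t₀ ⬝ᵥ e), fun α hα => ?_⟩
    have := mem_feas.1 hα.2 t₀
    rw [dotProduct_add, dotProduct_smul, smul_eq_mul] at this
    rw [le_div_iff₀ ht₀]
    linarith
  have hI0 : (0 : ℝ) ∈ I := ⟨le_rfl, by simpa using hy⟩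
  have hmem : sSup I ∈ I := hIcl.csSup_mem ⟨0, hI0⟩ hIbdd
  set α := sSup I with hα
  have hsub : activeIdx a b y ⊆ activeIdx a b (y + α • e) := fun t ht => by
    rw [mem_activeIdx, dotProduct_add, dotProduct_smul, heT t ht, smul_zero, add_zero]
    exact ht
  obtain ⟨t₁, ht₁, ht₁e⟩ : ∃ t ∈ activeIdx a b (y + α • e), 0 < a t ⬝ᵥ e := by
    by_contra! h
    have hdir : e ∈ feasDirs a b (y + α • e) := by
      rw [hLOP _ hmem.2]
      exact homFeas_subset_negPolar _ h
    obtain ⟨ε, hε, hfe⟩ := hdir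
    have h1 := hfe ε ⟨hε.le, le_rfl⟩
    rw [add_assoc, ← add_smul] at h1
    have h2 : α + ε ≤ α := le_csSup hIbdd ⟨add_nonneg hmem.1 hε.le, h1⟩
    linarith
  refine ⟨y + α • e, hmem.2, Submodule.add_mem _ hyV (Submodule.smul_mem _ _ heV), hsub, ?_⟩
  refine Submodule.finrank_lt_finrank_of_lt (lt_of_le_of_ne
    (Submodule.span_mono (image_mono hsub)) fun heq => ?_)
  have h1 : a t₁ ∈ Submodule.span ℝ (a '' activeIdx a b y) := by
    rw [heq]
    exact Submodule.subset_span ⟨t₁, ht₁, rfl⟩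
  have h2 : Submodule.span ℝ (a '' activeIdx a b y) ≤
      LinearMap.ker (dotProductEquiv ℝ (Fin n) e) := by
    rw [Submodule.span_le]
    rintro _ ⟨t, ht, rfl⟩
    rw [SetLike.mem_coe, LinearMap.mem_ker, dotProductEquiv_apply_apply, dotProduct_comm]
    exact heT t ht
  have h3 := h2 h1
  rw [LinearMap.mem_ker, dotProductEquiv_apply_apply, dotProduct_comm] at h3
  linarith

lemma exists_mem_Eset_homHof_le [CompactSpace T] (ha : Continuous a)
    (hLOP : ∀ x ∈ feas a b, feasDirs a b x = negPolar (coneHull (a '' activeIdx a b x)))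
    {y : Fin n → ℝ} (hy : y ∈ feas a b) :
    ∃ z ∈ Eset a b, homHof a p (activeIdx a b y) ≤ homHof a p (activeIdx a b z) := by
  have key : ∀ k : ℕ, ∀ y ∈ feas a b, y ∈ Submodule.span ℝ (range a) →
      n ≤ Module.finrank ℝ (Submodule.span ℝ (a '' activeIdx a b y)) + k →
      ∃ z ∈ Eset a b, homHof a p (activeIdx a b y) ≤ homHof a p (activeIdx a b z) := by
    intro k
    induction k with
    | zero =>
      intro y hy hyV hk
      by_cases hyE : y ∈ Eset a b
      · exact ⟨y, hyE, le_rfl⟩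
      obtain ⟨z, -, -, -, hlt⟩ := exists_finrank_lt_of_notMem_Eset hLOP hy hyV hyE
      have := Submodule.finrank_le (Submodule.span ℝ (a '' activeIdx a b z))
      rw [Module.finrank_fin_fun] at this
      omega
    | succ k ih =>
      intro y hy hyV hk
      by_cases hyE : y ∈ Eset a b
      · exact ⟨y, hyE, le_rfl⟩
      obtain ⟨z, hz, hzV, hsub, hlt⟩ := exists_finrank_lt_of_notMem_Eset hLOP hy hyV hyE
      obtain ⟨w, hw, hle⟩ := ih z hz hzV (by omega)
      exact ⟨w, hw, (homHof_mono ha hy hsub).trans hle⟩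
  obtain ⟨v, hvV, hv⟩ := exists_mem_span_dotProduct_eq a y
  have hact : activeIdx a b v = activeIdx a b y := by
    ext t
    rw [mem_activeIdx, mem_activeIdx, hv]
  rw [← hact]
  exact key n v (fun t => (hv t).trans_le (hy t)) hvV (by omega)

lemma hofF_le_iSup_homHof [CompactSpace T] (ha : Continuous a) (hp : ∀ x, p x = 0 → x = 0)
    (hdom : (feas a b).Nonempty)
    (hLOP : ∀ x ∈ feas a b, feasDirs a b x = negPolar (coneHull (a '' activeIdx a b x))) :
    hofF a p b ≤ ⨆ y ∈ feas a b, homHof a p (activeIdx a b y) := by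
  refine iSup_le fun x => ?_
  have hpc := p.continuous_pi_fin
  obtain ⟨y, hy, hmin⟩ := p.exists_isMinOn_of_le hp isClosed_feas hdom
    (φ := fun y => p (y - x)) (by fun_prop) x (r := 1) (fun e => by rw [one_mul]) zero_le_one
  refine le_iSup₂_of_le y hy ?_
  set H := homHof a p (activeIdx a b y) with hH
  rcases eq_or_ne H ⊤ with hHtop | hHtop
  · rw [hHtop]
    exact le_top
  have hproj : ∀ e ∈ homFeas a (activeIdx a b y), p (x - y) ≤ p (x - y - e) := fun e he => by
    have hdir : e ∈ feasDirs a b y := by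
      rw [hLOP y hy]
      exact homFeas_subset_negPolar _ he
    obtain ⟨ε, hε, hfe⟩ := hdir
    set α := min ε 1 with hα
    have hα0 : 0 < α := lt_min hε one_pos
    have hα1 : α ≤ 1 := min_le_right _ _
    have h1 : p (y - x) ≤ p (y + α • e - x) := hmin (hfe α ⟨hα0.le, min_le_left _ _⟩)
    have h2 : y + α • e - x = -((1 - α) • (x - y) + α • (x - y - e)) := by module
    rw [h2, map_neg_eq_map, map_sub_rev] at h1
    have h3 := h1.trans (map_add_le_add p _ _)
    rw [map_smul_eq_mul, map_smul_eq_mul, Real.norm_of_nonneg hα0.le,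
      Real.norm_of_nonneg (sub_nonneg.2 hα1)] at h3
    have h4 : α * p (x - y) ≤ α * p (x - y - e) := by linarith
    exact le_of_mul_le_mul_left h4 hα0
  have hbound : ∀ b' ∈ {b' : C(T, ℝ) | x ∈ feas a b'}, pDist p x (feas a b) / H ≤ edist b b' := by
    intro b' hb'
    refine ENNReal.div_le_of_le_mul ?_
    rw [edist_dist]
    rcases (dist_nonneg (x := b) (y := b')).eq_or_lt with h0 | hpos
    · have : b = b' := dist_eq_zero.1 h0.symm
      subst this
      rw [pDist_eq_zero_of_mem (S := feas a b) hb']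
      exact bot_le
    · refine le_trans ?_ (pDist_homFeas_le (a := a) (p := p) (S := activeIdx a b y)
        (d := x - y) hpos fun t ht => ?_)
      · exact (pDist_le hy).trans
          (le_pDist_iff.2 fun e he => ENNReal.ofReal_le_ofReal (hproj e he))
      · have h1 := mem_feas.1 hb' t
        have h2 := ContinuousMap.dist_apply_le_dist (f := b) (g := b') t
        rw [Real.dist_eq] at h2
        rw [dotProduct_sub, mem_activeIdx.1 ht]
        linarith [neg_abs_le (b t - b' t)]
  have hne : {b' : C(T, ℝ) | x ∈ feas a b'}.Nonempty :=
    ⟨⟨fun t => a t ⬝ᵥ x, continuous_dotProduct_left ha x⟩, fun _ => le_rfl⟩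
  have hfin : Metric.infEDist b {b' : C(T, ℝ) | x ∈ feas a b'} ≠ ⊤ :=
    Metric.infEDist_ne_top hne
  have h1 := Metric.le_infEDist.2 hbound
  rw [ENNReal.div_le_iff_le_mul (Or.inr hfin) (Or.inl hHtop), mul_comm] at h1
  exact ENNReal.div_le_of_le_mul h1

end LocallyPolyhedral

/-- Theorem `thm 1`. Let `b̄ ∈ dom F` and assume `σ(b̄)` is locally
polyhedral, i.e. `D(F(b̄),x) = A(x)°` for every `x ∈ F(b̄)`. Then
`Hof F(b̄) = sup_{x ∈ E(b̄)} clm F(b̄,x)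
          = sup_{x ∈ E(b̄)} sup_{D ∈ 𝒟(x)} d_*(0ₙ, conv{a_t : t ∈ D})⁻¹`. -/
theorem hofF_eq_sup_clm_extreme_of_LOP
    {n : ℕ} {T : Type*} [MetricSpace T] [CompactSpace T]
    (a : T → (Fin n → ℝ)) (ha : Continuous a)
    (p : Seminorm ℝ (Fin n → ℝ)) (hp : ∀ x, p x = 0 → x = 0)
    (bbar : C(T, ℝ)) (hdom : (feas a bbar).Nonempty)
    (hLOP : ∀ x ∈ feas a bbar,
        feasDirs a bbar x = negPolar (coneHull (a '' activeIdx a bbar x))) :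
    hofF a p bbar = (⨆ x ∈ Eset a bbar, clmF a p bbar x) ∧
    hofF a p bbar =
      (⨆ x ∈ Eset a bbar, ⨆ D ∈ Dfam a bbar x,
        (dualDist0 p (convexHull ℝ (a '' D)))⁻¹) := by
  have hE : ∀ x ∈ Eset a bbar, x ∈ feas a bbar := fun x hx => hx.1.1
  have hle : hofF a p bbar ≤ ⨆ x ∈ Eset a bbar, homHof a p (activeIdx a bbar x) := by
    refine (hofF_le_iSup_homHof ha hp hdom hLOP).trans (iSup₂_le fun y hy => ?_)
    obtain ⟨z, hz, hyz⟩ := exists_mem_Eset_homHof_le (p := p) ha hLOP hy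
    exact le_iSup₂_of_le z hz hyz
  have hclm : (⨆ x ∈ Eset a bbar, homHof a p (activeIdx a bbar x)) ≤
      ⨆ x ∈ Eset a bbar, clmF a p bbar x :=
    iSup₂_mono fun x hx => homHof_le_clmF ha (hE x hx)
  have hge : (⨆ x ∈ Eset a bbar, clmF a p bbar x) ≤ hofF a p bbar :=
    iSup₂_le fun x _ => clmF_le_hofF x
  refine ⟨le_antisymm (hle.trans hclm) hge, ?_⟩
  simp only [← homHof_eq_iSup_inv_dualDist0 ha hp]
  exact le_antisymm hle (hclm.trans hge)
end

section
/- Let b̄ ∈ dom F and x̄ ∈ F(b̄) with f_{b̄}(x̄) = 0, and assume the regularity condition holds at x̄: there is a neighborhood W of x̄ such that F(b̄) ∩ W = (x̄ + A(x̄)°) ∩ W. Then clm F(b̄,x̄) = d_*(0ₙ, end conv{a_t : t ∈ T(x̄)})⁻¹ = sup_{D ∈ D(x̄)} d_*(0ₙ, conv{a_t : t ∈ D})⁻¹, where conv{a_t : t ∈ T(x̄)} equals the convex subdifferential ∂f_{b̄}(x̄), and D(x̄) is the family of subsets D ⊆ T(x̄) such that the system { a_t'd = 1 for t ∈ D, a_t'd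 < 1 for t ∈ T(x̄) \ D } has a solution d ∈ ℝⁿ. -/
open Filter Set EMetric
open scoped Topology ENNReal NNReal

/-- The supremum function `f_b(x) = sup_{t ∈ T} (a_t'x − b_t)`. -/
noncomputable def fSup {n : ℕ} {T : Type*} [TopologicalSpace T]
    (a : T → (Fin n → ℝ)) (b : C(T, ℝ)) (x : Fin n → ℝ) : ℝ :=
  ⨆ t : T, ((∑ i, a t i * x i) - b t)

/-- The end set of a convex set `C ⊆ ℝⁿ`:
`end C = {u ∈ cl C : no μ > 1 satisfies μ·u ∈ cl C}`. -/
def endSet {n : ℕ} (C : Set (Fin n → ℝ)) : Set (Fin n → ℝ) :=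
  {u ∈ closure C | ¬ ∃ μ : ℝ, 1 < μ ∧ μ • u ∈ closure C}

theorem Seminorm.continuous_pi {n : ℕ} (p : Seminorm ℝ (Fin n → ℝ)) : Continuous p := by
  have := p.convexOn.locallyLipschitz
  exact this.continuous

/-- A norm on `ℝⁿ` dominates a multiple of the sup norm. -/
theorem Seminorm.exists_norm_le_mul {n : ℕ} (p : Seminorm ℝ (Fin n → ℝ))
    (hp : ∀ x, p x = 0 → x = 0) : ∃ C : ℝ, 0 < C ∧ ∀ x, ‖x‖ ≤ C * p x := by
  obtain hS | hS := (Metric.sphere (0 : Fin n → ℝ) 1).eq_empty_or_nonempty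
  · refine ⟨1, one_pos, fun x => ?_⟩
    by_cases hx : x = 0
    · simp [hx]
    · have hmem : ‖x‖⁻¹ • x ∈ Metric.sphere (0 : Fin n → ℝ) 1 := by
        simp [norm_smul, norm_ne_zero_iff.2 hx]
      simp [hS] at hmem
  · obtain ⟨y, hy, hmin⟩ := (isCompact_sphere (0 : Fin n → ℝ) 1).exists_isMinOn hS
      p.continuous_pi.continuousOn
    have hy1 : ‖y‖ = 1 := by simpa using hy
    have hpy : 0 < p y := lt_of_le_of_ne (apply_nonneg p y) fun h => by
      simp [hp y h.symm] at hy1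
    refine ⟨(p y)⁻¹, inv_pos.2 hpy, fun x => ?_⟩
    by_cases hx : x = 0
    · simp [hx]
    · have hx0 : 0 < ‖x‖ := norm_pos_iff.2 hx
      have hmem : ‖x‖⁻¹ • x ∈ Metric.sphere (0 : Fin n → ℝ) 1 := by
        simp [norm_smul, hx0.ne']
      have h : p y ≤ p (‖x‖⁻¹ • x) := hmin hmem
      rw [map_smul_eq_mul, norm_inv, norm_norm] at h
      rw [inv_mul_eq_div, le_div_iff₀ hpy]
      rw [inv_mul_eq_div, le_div_iff₀ hx0] at h
      linarith

/-- The pairing of `u` with a fixed vector is bounded by the dual norm. -/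
theorem ofReal_dotProduct_le_dualNorm_mul {n : ℕ} (p : Seminorm ℝ (Fin n → ℝ))
    (hp : ∀ x, p x = 0 → x = 0) (u y : Fin n → ℝ) :
    ENNReal.ofReal (u ⬝ᵥ y) ≤ dualNorm p u * ENNReal.ofReal (p y) := by
  by_cases hy : y = 0
  · simp [hy]
  have hpy : 0 < p y := lt_of_le_of_ne (apply_nonneg p y) fun h => hy (hp y h.symm)
  have h1 : p ((p y)⁻¹ • y) ≤ 1 := by
    rw [map_smul_eq_mul, norm_inv, Real.norm_of_nonneg hpy.le, inv_mul_cancel₀ hpy.ne']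
  have h2 : ENNReal.ofReal |u ⬝ᵥ ((p y)⁻¹ • y)| ≤ dualNorm p u :=
    le_iSup₂ (f := fun (x : Fin n → ℝ) (_ : p x ≤ 1) => ENNReal.ofReal |∑ i, u i * x i|) _ h1
  calc ENNReal.ofReal (u ⬝ᵥ y)
      ≤ ENNReal.ofReal (|u ⬝ᵥ ((p y)⁻¹ • y)| * p y) := by
        apply ENNReal.ofReal_le_ofReal
        rw [dotProduct_smul, smul_eq_mul, abs_mul, abs_of_pos (inv_pos.2 hpy), mul_comm, ← mul_assoc,
          mul_inv_cancel₀ hpy.ne', one_mul]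
        exact le_abs_self _
    _ = ENNReal.ofReal |u ⬝ᵥ ((p y)⁻¹ • y)| * ENNReal.ofReal (p y) :=
        ENNReal.ofReal_mul (abs_nonneg _)
    _ ≤ _ := by gcongr

theorem dualNorm_le_add_mul_norm_sub {n : ℕ} (p : Seminorm ℝ (Fin n → ℝ))
    (hp : ∀ x, p x = 0 → x = 0) : ∃ C : ℝ, 0 < C ∧
      ∀ u v, dualNorm p u ≤ dualNorm p v + ENNReal.ofReal (C * ‖u - v‖) := by
  obtain ⟨C, hC, hCp⟩ := p.exists_norm_le_mul hp
  refine ⟨(n + 1) * C, by positivity, fun u v => iSup₂_le fun x hx => ?_⟩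
  have h2 : ENNReal.ofReal |v ⬝ᵥ x| ≤ dualNorm p v :=
    le_iSup₂ (f := fun (x : Fin n → ℝ) (_ : p x ≤ 1) => ENNReal.ofReal |∑ i, v i * x i|) _ hx
  have hxC : ‖x‖ ≤ C := (hCp x).trans (by nlinarith)
  have h3 : |(u - v) ⬝ᵥ x| ≤ (n + 1) * C * ‖u - v‖ := by
    calc |(u - v) ⬝ᵥ x| ≤ ∑ i, |(u - v) i * x i| := Finset.abs_sum_le_sum_abs _ _
      _ ≤ ∑ _i : Fin n, ‖u - v‖ * C := by
        refine Finset.sum_le_sum fun i _ => ?_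
        rw [abs_mul]
        exact mul_le_mul (norm_le_pi_norm (u - v) i) ((norm_le_pi_norm x i).trans hxC)
          (abs_nonneg _) (norm_nonneg _)
      _ = n * (‖u - v‖ * C) := by simp
      _ ≤ _ := by nlinarith [mul_nonneg (norm_nonneg (u - v)) hC.le]
  calc ENNReal.ofReal |u ⬝ᵥ x| ≤ ENNReal.ofReal (|v ⬝ᵥ x| + (n + 1) * C * ‖u - v‖) := by
        apply ENNReal.ofReal_le_ofReal
        have : u ⬝ᵥ x = v ⬝ᵥ x + (u - v) ⬝ᵥ x := by rw [sub_dotProduct]; ring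
        rw [this]
        exact (abs_add_le _ _).trans (by gcongr)
    _ = ENNReal.ofReal |v ⬝ᵥ x| + ENNReal.ofReal ((n + 1) * C * ‖u - v‖) :=
        ENNReal.ofReal_add (abs_nonneg _) (by positivity)
    _ ≤ _ := by gcongr

theorem dualNorm_le_ofReal_s18 {n : ℕ} {p : Seminorm ℝ (Fin n → ℝ)} {w : Fin n → ℝ} {τ : ℝ}
    (hτ : 0 ≤ τ) (h : ∀ z, w ⬝ᵥ z ≤ τ * p z) : dualNorm p w ≤ ENNReal.ofReal τ := by
  refine iSup₂_le fun x hx => ENNReal.ofReal_le_ofReal (abs_le'.2 ⟨?_, ?_⟩)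
  · exact (h x).trans (by nlinarith)
  · have := h (-x)
    rw [dotProduct_neg, map_neg_eq_map] at this
    exact this.trans (by nlinarith)

theorem LinearMap.exists_eq_dotProduct {n : ℕ} (g : (Fin n → ℝ) →ₗ[ℝ] ℝ) :
    ∃ z : Fin n → ℝ, ∀ x, g x = x ⬝ᵥ z := by
  refine ⟨fun i => g fun j => if i = j then 1 else 0, fun x => ?_⟩
  simpa [dotProduct] using g.pi_apply_eq_sum_univ x

/-- Hahn–Banach: every vector is normed by a functional of the scaled dual ball. -/
theorem Seminorm.exists_dotProduct_eq_s18 {n : ℕ} (p : Seminorm ℝ (Fin n → ℝ)) {τ : ℝ} (hτ : 0 ≤ τ)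
    (z : Fin n → ℝ) : ∃ w : Fin n → ℝ, w ⬝ᵥ z = τ * p z ∧ ∀ y, w ⬝ᵥ y ≤ τ * p y := by
  by_cases hz : z = 0
  · exact ⟨0, by simp [hz], fun y => by simpa using mul_nonneg hτ (apply_nonneg p y)⟩
  obtain ⟨g, hg, hgp⟩ := exists_extension_of_le_sublinear
    (LinearPMap.mkSpanSingleton z (τ * p z) hz) (fun y => τ * p y)
    (fun c hc x => by
      simp only [map_smul_eq_mul, Real.norm_of_nonneg hc.le]; ring)
    (fun x y => by nlinarith [map_add_le_add p x y])
    (by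
      rintro ⟨x, hx⟩
      obtain ⟨c, rfl⟩ := Submodule.mem_span_singleton.1 hx
      rw [LinearPMap.mkSpanSingleton'_apply]
      simp only [RingHom.id_apply, smul_eq_mul, map_smul_eq_mul, Real.norm_eq_abs]
      nlinarith [mul_le_mul_of_nonneg_right (le_abs_self c) (mul_nonneg hτ (apply_nonneg p z))])
  obtain ⟨w, hw⟩ := g.exists_eq_dotProduct
  refine ⟨w, ?_, fun y => ?_⟩
  · rw [dotProduct_comm, ← hw]
    have := hg ⟨z, Submodule.mem_span_singleton_self z⟩
    rw [LinearPMap.mkSpanSingleton_apply ℝ ℝ hz] at this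
    exact this
  · rw [dotProduct_comm, ← hw]
    exact hgp y

/-- One-sided first-order estimate for a family of affine functions over a compact index set. -/
theorem IsCompact.eventually_add_mul_le {X : Type*} [TopologicalSpace X] {A : Set X}
    (hA : IsCompact A) {g h : X → ℝ} (hg : Continuous g) (hh : Continuous h) {s : ℝ}
    (hg0 : ∀ t ∈ A, g t ≤ 0) (hs : ∀ t ∈ A, g t = 0 → h t < s) :
    ∀ᶠ ε : ℝ in 𝓝[>] 0, ∀ t ∈ A, g t + ε * h t ≤ ε * s := by
  have hA' : IsCompact (A ∩ {t | s ≤ h t}) := hA.inter_right (isClosed_le continuous_const hh)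
  obtain he | hne := (A ∩ {t | s ≤ h t}).eq_empty_or_nonempty
  · filter_upwards [self_mem_nhdsWithin] with ε hε t ht
    have hlt : h t < s := by
      by_contra hcon
      exact (he.subset ⟨ht, not_lt.1 hcon⟩ : t ∈ (∅ : Set X))
    nlinarith [hg0 t ht, mul_lt_mul_of_pos_left hlt hε]
  · obtain ⟨t₀, ⟨ht₀, hst₀⟩, hmax⟩ := hA'.exists_isMaxOn hne hg.continuousOn
    obtain ⟨t₁, ⟨_, hst₁⟩, hmax₁⟩ := hA'.exists_isMaxOn hne hh.continuousOn
    have hneg : g t₀ < 0 := lt_of_le_of_ne (hg0 t₀ ht₀) fun h0 =>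
      absurd (hs t₀ ht₀ h0) (not_lt.2 hst₀)
    have hlim : Tendsto (fun ε : ℝ => g t₀ + ε * (h t₁ - s)) (𝓝[>] 0) (𝓝 (g t₀)) := by
      have : Continuous fun ε : ℝ => g t₀ + ε * (h t₁ - s) := by fun_prop
      simpa using (this.tendsto 0).mono_left nhdsWithin_le_nhds
    filter_upwards [self_mem_nhdsWithin, hlim.eventually (gt_mem_nhds hneg)] with ε hε hlt t ht
    have hε' : (0 : ℝ) < ε := hε
    obtain hts | hts := lt_or_ge (h t) s
    · nlinarith [hg0 t ht, mul_lt_mul_of_pos_left hts hε']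
    · have h1 : g t ≤ g t₀ := hmax ⟨ht, hts⟩
      have h2 : h t ≤ h t₁ := hmax₁ ⟨ht, hts⟩
      nlinarith [mul_le_mul_of_nonneg_left h2 hε'.le]

/-- A bounded convex set at dual distance more than `τ` from the origin admits a direction along
which its support function decreases faster than `τ p` increases. -/
theorem exists_dotProduct_lt_of_lt_dualDist0 {n : ℕ} (p : Seminorm ℝ (Fin n → ℝ))
    (hp : ∀ x, p x = 0 → x = 0) {Q : Set (Fin n → ℝ)} (hQ : Convex ℝ Q)
    (hQb : Bornology.IsBounded Q) {τ : ℝ} (hτ : 0 ≤ τ) (hdist : ENNReal.ofReal τ < dualDist0 p Q) :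
    ∃ (z : Fin n → ℝ) (s : ℝ), (∀ u ∈ Q, u ⬝ᵥ z < s) ∧ s + τ * p z < 0 := by
  have hdisj : Disjoint (closure Q) {w : Fin n → ℝ | ∀ y, w ⬝ᵥ y ≤ τ * p y} := by
    refine Set.disjoint_left.2 fun w hwQ hw => ?_
    have hwτ : dualNorm p w ≤ ENNReal.ofReal τ := dualNorm_le_ofReal_s18 hτ hw
    obtain ⟨C, hC, hCp⟩ := dualNorm_le_add_mul_norm_sub p hp
    obtain ⟨r, hr, hrd⟩ := ENNReal.lt_iff_exists_real_btwn.1 hdist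
    have hτr : τ < r := (ENNReal.ofReal_lt_ofReal_iff_of_nonneg hτ).1 hrd.1
    obtain ⟨u, hu, huw⟩ := Metric.mem_closure_iff.1 hwQ ((r - τ) / C)
      (div_pos (sub_pos.2 hτr) hC)
    have h1 : C * ‖u - w‖ ≤ r - τ := by
      rw [dist_comm, dist_eq_norm, lt_div_iff₀ hC] at huw
      linarith
    have h2 : dualNorm p u ≤ ENNReal.ofReal r := by
      calc dualNorm p u ≤ dualNorm p w + ENNReal.ofReal (C * ‖u - w‖) := hCp u w
        _ ≤ ENNReal.ofReal τ + ENNReal.ofReal (r - τ) := by gcongr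
        _ = ENNReal.ofReal r := by
          rw [← ENNReal.ofReal_add hτ (by linarith)]; congr 1; ring
    exact absurd (hrd.2.trans_le (iInf₂_le u hu)) (not_lt.2 h2)
  have hclosed : IsClosed {w : Fin n → ℝ | ∀ y, w ⬝ᵥ y ≤ τ * p y} := by
    have : {w : Fin n → ℝ | ∀ y, w ⬝ᵥ y ≤ τ * p y} = ⋂ y, {w | w ⬝ᵥ y ≤ τ * p y} := by
      ext w; simp
    rw [this]
    refine isClosed_iInter fun y => isClosed_le ?_ continuous_const
    exact continuous_id.dotProduct continuous_const
  have hconv : Convex ℝ {w : Fin n → ℝ | ∀ y, w ⬝ᵥ y ≤ τ * p y} := by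
    intro w hw v hv α β hα hβ hαβ y
    have h1 := mul_le_mul_of_nonneg_left (hw y) hα
    have h2 := mul_le_mul_of_nonneg_left (hv y) hβ
    rw [add_dotProduct, smul_dotProduct, smul_dotProduct, smul_eq_mul, smul_eq_mul]
    have h3 : τ * p y = α * (τ * p y) + β * (τ * p y) := by rw [← add_mul, hαβ, one_mul]
    linarith
  obtain ⟨f, s, v, hs, hsv, hv⟩ := geometric_hahn_banach_compact_closed hQ.closure
    hQb.isCompact_closure hconv hclosed hdisj
  obtain ⟨z, hz⟩ := (f : (Fin n → ℝ) →ₗ[ℝ] ℝ).exists_eq_dotProduct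
  obtain ⟨w, hwz, hw⟩ := p.exists_dotProduct_eq_s18 hτ (-z)
  refine ⟨z, s, fun u hu => ?_, ?_⟩
  · rw [← hz]
    exact hs u (subset_closure hu)
  · have h1 : v < w ⬝ᵥ z := by
      rw [← hz]
      exact hv w hw
    rw [dotProduct_neg, map_neg_eq_map] at hwz
    linarith

/-- Global error bound for the sublinear system `aₜ'd ≤ 0`, `t ∈ A`: if the faces
`conv {aₜ : t ∈ A, aₜ'e = 1}` exposed by the directions `e` at which the support function equals `1`
are at dual distance more than `τ` from the origin, then `τ d(d, K) ≤ max_{t ∈ A} aₜ'd`. -/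
theorem exists_mul_le_of_lt_dualDist0_face {n : ℕ} {T : Type*} [TopologicalSpace T] {A : Set T}
    (hA : IsCompact A) {a : T → (Fin n → ℝ)} (ha : Continuous a) (p : Seminorm ℝ (Fin n → ℝ))
    (hp : ∀ x, p x = 0 → x = 0) {τ : ℝ} (hτ : 0 < τ)
    (hface : ∀ e : Fin n → ℝ, (∀ t ∈ A, a t ⬝ᵥ e ≤ 1) →
      ENNReal.ofReal τ < dualDist0 p (convexHull ℝ (a '' {t ∈ A | a t ⬝ᵥ e = 1})))
    {d : Fin n → ℝ} {c : ℝ} (hc : 0 ≤ c) (hd : ∀ t ∈ A, a t ⬝ᵥ d ≤ c) :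
    ∃ k : Fin n → ℝ, (∀ t ∈ A, a t ⬝ᵥ k ≤ 0) ∧ τ * p (d - k) ≤ c := by
  by_contra! hcon
  obtain rfl | hne := A.eq_empty_or_nonempty
  · have := hcon d (by simp)
    simp at this
    linarith
  have hcont (x : Fin n → ℝ) : Continuous fun t => a t ⬝ᵥ x := ha.dotProduct continuous_const
  set σ : (Fin n → ℝ) → ℝ := fun x => sSup ((fun t => a t ⬝ᵥ x) '' A) with hσ
  have hσc : Continuous σ := hA.continuous_sSup (f := fun x t => a t ⬝ᵥ x) (by
    exact (ha.comp continuous_snd).dotProduct continuous_fst)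
  have hle (x : Fin n → ℝ) (t : T) (ht : t ∈ A) : a t ⬝ᵥ x ≤ σ x :=
    le_csSup (hA.image (hcont x)).bddAbove (mem_image_of_mem _ ht)
  have hσle (x : Fin n → ℝ) (m : ℝ) (h : ∀ t ∈ A, a t ⬝ᵥ x ≤ m) : σ x ≤ m :=
    csSup_le (hne.image _) (by rintro _ ⟨t, ht, rfl⟩; exact h t ht)
  obtain ⟨C, hC, hCp⟩ := p.exists_norm_le_mul hp
  have hhc : Continuous fun x => max (σ x) 0 + τ * p (d - x) :=
    (hσc.max continuous_const).add
      (continuous_const.mul (p.continuous_pi.comp (continuous_const.sub continuous_id)))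
  obtain ⟨x, hx⟩ : ∃ x, ∀ y, max (σ x) 0 + τ * p (d - x) ≤ max (σ y) 0 + τ * p (d - y) := by
    refine hhc.exists_forall_le (tendsto_atTop_mono (f := fun y => τ * C⁻¹ * (‖y‖ - ‖d‖)) ?_ ?_)
    · intro y
      have h1 := hCp (d - y)
      have h2 : ‖y‖ - ‖d‖ ≤ ‖d - y‖ := by rw [norm_sub_rev]; exact norm_sub_norm_le y d
      have h3 : C⁻¹ * (‖y‖ - ‖d‖) ≤ p (d - y) := by
        rw [inv_mul_le_iff₀ hC]; linarith
      have h4 := mul_le_mul_of_nonneg_left h3 hτ.le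
      have h5 := le_max_right (σ y) 0
      linarith
    · refine Tendsto.const_mul_atTop (by positivity) ?_
      exact tendsto_atTop_add_const_right _ _ (tendsto_norm_cocompact_atTop)
  have hxd := hx d
  rw [sub_self, map_zero, mul_zero, add_zero] at hxd
  have hxd' : max (σ d) 0 ≤ c := max_le (hσle d c hd) hc
  have hpos : 0 < σ x := by
    by_contra! hσx
    have h1 := hcon x fun t ht => (hle x t ht).trans hσx
    have h2 := le_max_right (σ x) 0
    linarith
  obtain ⟨z, s, hs, hsz⟩ := exists_dotProduct_lt_of_lt_dualDist0 p hp (convex_convexHull ℝ _)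
    (isBounded_convexHull.2 ((hA.image ha).isBounded.subset (image_mono (sep_subset _ _)))) hτ.le
    (hface ((σ x)⁻¹ • x) fun t ht => by
      rw [dotProduct_smul, smul_eq_mul, inv_mul_le_iff₀ hpos, mul_one]
      exact hle x t ht)
  have hev := hA.eventually_add_mul_le (g := fun t => a t ⬝ᵥ x - σ x) (h := fun t => a t ⬝ᵥ z)
    (s := s) ((hcont x).sub continuous_const) (hcont z) (fun t ht => sub_nonpos.2 (hle x t ht))
    (fun t ht h0 => hs _ (subset_convexHull ℝ _ (mem_image_of_mem a ⟨ht, by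
      rw [dotProduct_smul, smul_eq_mul, sub_eq_zero.1 h0, inv_mul_cancel₀ hpos.ne']⟩)))
  have hpos' : ∀ᶠ ε : ℝ in 𝓝[>] 0, 0 < σ x + ε * s := by
    have : Continuous fun ε : ℝ => σ x + ε * s := by fun_prop
    refine ((this.tendsto 0).mono_left nhdsWithin_le_nhds).eventually (lt_mem_nhds ?_)
    simpa using hpos
  have hε_pos : ∀ᶠ ε : ℝ in 𝓝[>] 0, 0 < ε := self_mem_nhdsWithin
  obtain ⟨ε, hε, hε0, hεpos⟩ := (hev.and (hε_pos.and hpos')).exists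
  have h1 : σ (x + ε • z) ≤ σ x + ε * s := hσle _ _ fun t ht => by
    have := hε t ht
    rw [dotProduct_add, dotProduct_smul, smul_eq_mul]
    linarith
  have h2 : p (d - (x + ε • z)) ≤ p (d - x) + ε * p z := by
    have := map_sub_le_add p (d - x) (ε • z)
    rwa [map_smul_eq_mul, Real.norm_of_nonneg hε0.le, sub_sub] at this
  have h3 := hx (x + ε • z)
  have h4 : max (σ (x + ε • z)) 0 ≤ σ x + ε * s := max_le h1 hεpos.le
  have h5 := le_max_left (σ x) 0
  have h6 := mul_le_mul_of_nonneg_left h2 hτ.le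
  nlinarith [mul_neg_of_pos_of_neg hε0 hsz]

theorem mem_negPolar_coneHull {n : ℕ} {S : Set (Fin n → ℝ)} {u : Fin n → ℝ} :
    u ∈ negPolar (coneHull S) ↔ ∀ s ∈ S, s ⬝ᵥ u ≤ 0 := by
  constructor
  · intro h s hs
    exact h s (Or.inr ⟨1, zero_le_one, s, subset_convexHull ℝ S hs, (one_smul ℝ s).symm⟩)
  · rintro h k (rfl | ⟨c, hc, y, hy, rfl⟩)
    · simp
    · have hconv : Convex ℝ {y : Fin n → ℝ | y ⬝ᵥ u ≤ 0} := by
        intro w hw v hv α β hα hβ _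
        have h1 := mul_nonpos_of_nonneg_of_nonpos hα hw
        have h2 := mul_nonpos_of_nonneg_of_nonpos hβ hv
        change (α • w + β • v) ⬝ᵥ u ≤ 0
        rw [add_dotProduct, smul_dotProduct, smul_dotProduct, smul_eq_mul, smul_eq_mul]
        exact add_nonpos h1 h2
      have hyu : y ⬝ᵥ u ≤ 0 := convexHull_min (fun s hs => h s hs) hconv hy
      change (c • y) ⬝ᵥ u ≤ 0
      rw [smul_dotProduct, smul_eq_mul]
      exact mul_nonpos_of_nonneg_of_nonpos hc hyu

theorem isCompact_activeIdx {n : ℕ} {T : Type*} [TopologicalSpace T] [CompactSpace T]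
    {a : T → (Fin n → ℝ)} (ha : Continuous a) (b : C(T, ℝ)) (x : Fin n → ℝ) :
    IsCompact (activeIdx a b x) :=
  (isClosed_eq (ha.dotProduct continuous_const) b.continuous).isCompact

/-- Error bound for the linearized system in terms of the family `Dfam`. -/
theorem pDist_negPolar_le {n : ℕ} {T : Type*} [TopologicalSpace T] [CompactSpace T]
    {a : T → (Fin n → ℝ)} (ha : Continuous a) (p : Seminorm ℝ (Fin n → ℝ))
    (hp : ∀ x, p x = 0 → x = 0) (bbar : C(T, ℝ)) (xbar : Fin n → ℝ) {d : Fin n → ℝ} {c : ℝ}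
    (hc : 0 < c) (hd : ∀ t ∈ activeIdx a bbar xbar, a t ⬝ᵥ d ≤ c) :
    pDist p d (negPolar (coneHull (a '' activeIdx a bbar xbar))) / ENNReal.ofReal c ≤
      ⨆ D ∈ Dfam a bbar xbar, (dualDist0 p (convexHull ℝ (a '' D)))⁻¹ := by
  refine le_of_forall_gt_imp_ge_of_dense fun r hr => ?_
  obtain rfl | hr_top := eq_or_ne r ⊤
  · exact le_top
  have hr0 : 0 < r.toReal := ENNReal.toReal_pos (ne_bot_of_gt hr) hr_top
  have hrinv : ENNReal.ofReal (r.toReal⁻¹) = r⁻¹ := by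
    rw [ENNReal.ofReal_inv_of_pos hr0, ENNReal.ofReal_toReal hr_top]
  obtain ⟨k, hk, hkc⟩ := exists_mul_le_of_lt_dualDist0_face (isCompact_activeIdx ha bbar xbar) ha p
    hp (inv_pos.2 hr0) (fun e he => by
      rw [hrinv, ENNReal.inv_lt_iff_inv_lt]
      refine lt_of_le_of_lt ?_ hr
      refine le_iSup₂ (f := fun D (_ : D ∈ Dfam a bbar xbar) =>
        (dualDist0 p (convexHull ℝ (a '' D)))⁻¹) _ ⟨sep_subset _ _, e, fun t ht => ht.2, ?_⟩
      exact fun t ht => lt_of_le_of_ne (he t ht.1) fun h => ht.2 ⟨ht.1, h⟩) hc.le hd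
  have hkK : k ∈ negPolar (coneHull (a '' activeIdx a bbar xbar)) :=
    mem_negPolar_coneHull.2 (by rintro _ ⟨t, ht, rfl⟩; exact hk t ht)
  refine ENNReal.div_le_of_le_mul ((iInf₂_le k hkK).trans ?_)
  rw [← ENNReal.ofReal_toReal hr_top, ← ENNReal.ofReal_mul hr0.le]
  refine ENNReal.ofReal_le_ofReal ?_
  rwa [inv_mul_le_iff₀ hr0] at hkc

/-- Under the regularity condition, the distance to the feasible set is locally bounded by the
distance to the linearized cone. -/
theorem eventually_pDist_feas_le {n : ℕ} {p : Seminorm ℝ (Fin n → ℝ)}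
    (hp : ∀ x, p x = 0 → x = 0) {S K : Set (Fin n → ℝ)} {xbar : Fin n → ℝ} (hxbar : xbar ∈ S)
    (hreg : ∃ W ∈ 𝓝 xbar, S ∩ W = ((fun u => xbar + u) '' K) ∩ W) :
    ∀ᶠ x in 𝓝 xbar, pDist p x S ≤ pDist p (x - xbar) K := by
  obtain ⟨W, hW, hSW⟩ := hreg
  obtain ⟨C, hC, hCp⟩ := p.exists_norm_le_mul hp
  obtain ⟨ρ, hρ, hball⟩ := Metric.mem_nhds_iff.1 hW
  have hsmall : ∀ᶠ x in 𝓝 xbar, p (x - xbar) < ρ / C / 2 := by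
    have : Continuous fun x => p (x - xbar) :=
      p.continuous_pi.comp (continuous_id.sub continuous_const)
    refine (this.tendsto xbar).eventually (gt_mem_nhds ?_)
    simp only [sub_self, map_zero]
    positivity
  filter_upwards [hsmall] with x hx
  refine le_iInf₂ fun k hk => ?_
  obtain hkρ | hkρ := lt_or_ge (p k) (ρ / C)
  · have hmem : xbar + k ∈ S := by
      have hkW : xbar + k ∈ W := hball (by
        rw [mem_ball_iff_norm, add_sub_cancel_left]
        exact (hCp k).trans_lt (by rwa [lt_div_iff₀ hC, mul_comm] at hkρ))
      exact (hSW.symm.subset ⟨mem_image_of_mem _ hk, hkW⟩).1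
    refine (iInf₂_le _ hmem).trans (le_of_eq ?_)
    rw [sub_sub]
  · refine (iInf₂_le _ hxbar).trans (ENNReal.ofReal_le_ofReal ?_)
    have := map_sub_le_add p (x - xbar) (x - xbar - k)
    rw [sub_sub_cancel] at this
    linarith

theorem clmF_le_iSup_Dfam {n : ℕ} {T : Type*} [TopologicalSpace T] [CompactSpace T]
    {a : T → (Fin n → ℝ)} (ha : Continuous a) (p : Seminorm ℝ (Fin n → ℝ))
    (hp : ∀ x, p x = 0 → x = 0) {bbar : C(T, ℝ)} {xbar : Fin n → ℝ} (hxbar : xbar ∈ feas a bbar)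
    (hreg : ∃ W ∈ 𝓝 xbar,
      feas a bbar ∩ W =
        ((fun u => xbar + u) '' negPolar (coneHull (a '' activeIdx a bbar xbar))) ∩ W) :
    clmF a p bbar xbar ≤ ⨆ D ∈ Dfam a bbar xbar, (dualDist0 p (convexHull ℝ (a '' D)))⁻¹ := by
  refine limsup_le_of_le (by isBoundedDefault) ?_
  have hloc := (continuous_snd.tendsto (bbar, xbar)).eventually
    (eventually_pDist_feas_le hp hxbar hreg)
  rw [eventually_inf_principal]
  filter_upwards [hloc] with q hq hfeas
  obtain hb | hb := eq_or_ne q.1 bbar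
  · have hmem : q.2 ∈ feas a bbar := hb ▸ hfeas
    have h0 : pDist p q.2 (feas a bbar) = 0 := by
      refine le_antisymm ((iInf₂_le _ hmem).trans ?_) zero_le
      simp
    simp [h0]
  · refine (ENNReal.div_le_div_right hq _).trans ?_
    rw [edist_dist]
    refine pDist_negPolar_le ha p hp bbar xbar (dist_pos.2 hb) fun t ht => ?_
    have h1 : a t ⬝ᵥ q.2 ≤ q.1 t := hfeas t
    have h2 : a t ⬝ᵥ xbar = bbar t := ht
    have h3 := ContinuousMap.dist_apply_le_dist (f := q.1) (g := bbar) t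
    rw [Real.dist_eq] at h3
    rw [dotProduct_sub]
    linarith [le_abs_self (q.1 t - bbar t)]

theorem convexHull_image_subset_endSet {n : ℕ} {T : Type*} [TopologicalSpace T]
    {a : T → (Fin n → ℝ)} {bbar : C(T, ℝ)} {xbar : Fin n → ℝ} {D : Set T}
    (hD : D ∈ Dfam a bbar xbar) :
    convexHull ℝ (a '' D) ⊆ endSet (convexHull ℝ (a '' activeIdx a bbar xbar)) := by
  obtain ⟨hDA, d, hd1, hd2⟩ := hD
  have hlin : IsLinearMap ℝ fun u : Fin n → ℝ => u ⬝ᵥ d :=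
    ⟨fun x y => add_dotProduct x y d, fun c x => smul_dotProduct c x d⟩
  have hle : closure (convexHull ℝ (a '' activeIdx a bbar xbar)) ⊆ {u | u ⬝ᵥ d ≤ 1} := by
    refine closure_minimal (convexHull_min ?_ (convex_halfSpace_le hlin 1))
      (isClosed_le (continuous_id.dotProduct continuous_const) continuous_const)
    rintro _ ⟨t, ht, rfl⟩
    by_cases htD : t ∈ D
    · exact (hd1 t htD).le
    · exact (hd2 t ⟨ht, htD⟩).le
  have heq : convexHull ℝ (a '' D) ⊆ {u | u ⬝ᵥ d = 1} := by
    refine convexHull_min ?_ (convex_hyperplane hlin 1)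
    rintro _ ⟨t, ht, rfl⟩
    exact hd1 t ht
  refine fun u hu => ⟨subset_closure (convexHull_mono (image_mono hDA) hu), ?_⟩
  rintro ⟨μ, hμ, hμu⟩
  have h1 : (μ • u) ⬝ᵥ d ≤ 1 := hle hμu
  have h2 : u ⬝ᵥ d = 1 := heq hu
  rw [smul_dotProduct, smul_eq_mul, h2] at h1
  linarith

theorem iSup_Dfam_le_inv_dualDist0_endSet {n : ℕ} {T : Type*} [TopologicalSpace T]
    (a : T → (Fin n → ℝ)) (p : Seminorm ℝ (Fin n → ℝ)) (bbar : C(T, ℝ)) (xbar : Fin n → ℝ) :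
    ⨆ D ∈ Dfam a bbar xbar, (dualDist0 p (convexHull ℝ (a '' D)))⁻¹ ≤
      (dualDist0 p (endSet (convexHull ℝ (a '' activeIdx a bbar xbar))))⁻¹ :=
  iSup₂_le fun _ hD => ENNReal.inv_le_inv.2 (biInf_mono (convexHull_image_subset_endSet hD))

/-- A functional separating `μ u` from the convex hull gives a direction along which the calmness
quotient is at least `(μ ‖u‖_*)⁻¹`. -/
theorem inv_mul_inv_dualNorm_le_clmF {n : ℕ} {T : Type*} [TopologicalSpace T] [CompactSpace T]
    {a : T → (Fin n → ℝ)} (ha : Continuous a) (p : Seminorm ℝ (Fin n → ℝ))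
    (hp : ∀ x, p x = 0 → x = 0) {bbar : C(T, ℝ)} {xbar : Fin n → ℝ} (hxbar : xbar ∈ feas a bbar)
    {u : Fin n → ℝ} (hu : u ∈ endSet (convexHull ℝ (a '' activeIdx a bbar xbar)))
    {μ : ℝ} (hμ : 1 < μ) :
    ENNReal.ofReal μ⁻¹ * (dualNorm p u)⁻¹ ≤ clmF a p bbar xbar := by
  obtain ⟨huC, hend⟩ := hu
  obtain ⟨f, s, hfs, hsf⟩ := geometric_hahn_banach_closed_point
    (convex_convexHull ℝ (a '' activeIdx a bbar xbar)).closure isClosed_closure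
    (fun h => hend ⟨μ, hμ, h⟩)
  obtain ⟨d, hd⟩ := (f : (Fin n → ℝ) →ₗ[ℝ] ℝ).exists_eq_dotProduct
  have hfd (x : Fin n → ℝ) : f x = x ⬝ᵥ d := hd x
  rw [hfd, smul_dotProduct, smul_eq_mul] at hsf
  have hud : 0 < u ⬝ᵥ d := by
    have := hfs u huC
    rw [hfd] at this
    nlinarith
  have hact (t : T) (ht : t ∈ activeIdx a bbar xbar) : a t ⬝ᵥ d < μ * (u ⬝ᵥ d) := by
    rw [← hfd]
    exact (hfs _ (subset_closure (subset_convexHull ℝ _ (mem_image_of_mem a ht)))).trans hsf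
  have hμ0 : 0 < μ := one_pos.trans hμ
  have hev := isCompact_univ.eventually_add_mul_le (g := fun t => a t ⬝ᵥ xbar - bbar t)
    (h := fun t => a t ⬝ᵥ d) (s := μ * (u ⬝ᵥ d))
    ((ha.dotProduct continuous_const).sub bbar.continuous) (ha.dotProduct continuous_const)
    (fun t _ => sub_nonpos.2 (hxbar t)) (fun t _ h0 => hact t (sub_eq_zero.1 h0))
  have hpolar (y : Fin n → ℝ) (hy : y ∈ feas a bbar) : u ⬝ᵥ (y - xbar) ≤ 0 := by
    have hsub : closure (convexHull ℝ (a '' activeIdx a bbar xbar)) ⊆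
        {v | v ⬝ᵥ (y - xbar) ≤ 0} := by
      refine closure_minimal (convexHull_min ?_ (convex_halfSpace_le
        ⟨fun v w => add_dotProduct v w _, fun c v => smul_dotProduct c v _⟩ 0))
        (isClosed_le (continuous_id.dotProduct continuous_const) continuous_const)
      rintro _ ⟨t, ht, rfl⟩
      have h1 : a t ⬝ᵥ y ≤ bbar t := hy t
      have h2 : a t ⬝ᵥ xbar = bbar t := ht
      change a t ⬝ᵥ (y - xbar) ≤ 0
      rw [dotProduct_sub]
      linarith
    exact hsub huC
  have htend : Tendsto (fun ε : ℝ => (bbar + ContinuousMap.const T (ε * (μ * (u ⬝ᵥ d))),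
      xbar + ε • d)) (𝓝[>] 0) (𝓝 (bbar, xbar)) := by
    have : Continuous fun ε : ℝ => (bbar + ContinuousMap.const T (ε * (μ * (u ⬝ᵥ d))),
        xbar + ε • d) := by
      refine Continuous.prodMk (continuous_const.add
        (ContinuousMap.continuous_const'.comp (by fun_prop))) (by fun_prop)
    have h0 := this.tendsto 0
    have hz : ContinuousMap.const T (0 : ℝ) = 0 := rfl
    simp only [zero_mul, zero_smul, add_zero, hz] at h0
    exact h0.mono_left nhdsWithin_le_nhds
  have hε_pos : ∀ᶠ ε : ℝ in 𝓝[>] 0, 0 < ε := self_mem_nhdsWithin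
  refine le_limsup_of_frequently_le' (Tendsto.frequently (f := fun ε : ℝ =>
    (bbar + ContinuousMap.const T (ε * (μ * (u ⬝ᵥ d))), xbar + ε • d)) (l₁ := 𝓝[>] 0)
    (tendsto_inf.2 ⟨htend, tendsto_principal.2 ?_⟩) (Eventually.frequently ?_))
  · filter_upwards [hev] with ε hε t
    have := hε t (mem_univ t)
    change a t ⬝ᵥ (xbar + ε • d) ≤ bbar t + ε * (μ * (u ⬝ᵥ d))
    rw [dotProduct_add, dotProduct_smul, smul_eq_mul]
    linarith
  · filter_upwards [hε_pos] with ε hε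
    have hnum : ENNReal.ofReal (ε * (u ⬝ᵥ d)) * (dualNorm p u)⁻¹ ≤
        pDist p (xbar + ε • d) (feas a bbar) := by
      refine le_iInf₂ fun y hy => ?_
      refine ENNReal.div_le_of_le_mul' ?_
      refine le_trans (ENNReal.ofReal_le_ofReal ?_) (ofReal_dotProduct_le_dualNorm_mul p hp u _)
      have h1 := hpolar y hy
      have h2 : xbar + ε • d - y = ε • d - (y - xbar) := by abel
      rw [h2, dotProduct_sub, dotProduct_smul, smul_eq_mul]
      linarith
    have hpos : 0 < ε * (μ * (u ⬝ᵥ d)) := by positivity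
    have hden : edist (bbar + ContinuousMap.const T (ε * (μ * (u ⬝ᵥ d)))) bbar ≤
        ENNReal.ofReal (ε * (μ * (u ⬝ᵥ d))) := by
      rw [edist_dist]
      refine ENNReal.ofReal_le_ofReal ((ContinuousMap.dist_le hpos.le).2 fun t => ?_)
      rw [ContinuousMap.add_apply, ContinuousMap.const_apply, Real.dist_eq, add_sub_cancel_left,
        abs_of_pos hpos]
    refine le_trans (le_of_eq ?_) (ENNReal.div_le_div hnum hden)
    rw [ENNReal.div_eq_inv_mul, ← mul_assoc, ← ENNReal.ofReal_inv_of_pos hpos,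
      ← ENNReal.ofReal_mul (inv_nonneg.2 hpos.le)]
    congr 2
    field_simp

theorem inv_dualDist0_endSet_le_clmF {n : ℕ} {T : Type*} [TopologicalSpace T] [CompactSpace T]
    {a : T → (Fin n → ℝ)} (ha : Continuous a) (p : Seminorm ℝ (Fin n → ℝ))
    (hp : ∀ x, p x = 0 → x = 0) {bbar : C(T, ℝ)} {xbar : Fin n → ℝ}
    (hxbar : xbar ∈ feas a bbar) :
    (dualDist0 p (endSet (convexHull ℝ (a '' activeIdx a bbar xbar))))⁻¹ ≤
      clmF a p bbar xbar := by
  simp only [dualDist0, ENNReal.inv_iInf]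
  refine iSup₂_le fun u hu => ?_
  have hle : ∀ᶠ μ : ℝ in 𝓝[>] 1, ENNReal.ofReal μ⁻¹ * (dualNorm p u)⁻¹ ≤ clmF a p bbar xbar := by
    filter_upwards [self_mem_nhdsWithin] with μ hμ
    exact inv_mul_inv_dualNorm_le_clmF ha p hp hxbar hu hμ
  refine le_of_tendsto ?_ hle
  have h1 : Tendsto (fun μ : ℝ => ENNReal.ofReal μ⁻¹) (𝓝[>] 1) (𝓝 1) := by
    have : Tendsto (fun μ : ℝ => μ⁻¹) (𝓝 1) (𝓝 1) := by
      simpa using tendsto_inv₀ (one_ne_zero (α := ℝ))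
    simpa using (ENNReal.tendsto_ofReal this).mono_left nhdsWithin_le_nhds
  simpa using ENNReal.Tendsto.mul_const h1 (Or.inl one_ne_zero)

/-- Theorem `Th_LiMengYan`, Li–Meng–Yang. Let `b̄ ∈ dom F` and
`x̄ ∈ F(b̄)` with `f_{b̄}(x̄) = 0`, and assume the regularity condition: there is a
neighborhood `W` of `x̄` with `F(b̄) ∩ W = (x̄ + A(x̄)°) ∩ W`. Then
`clm F(b̄,x̄) = d_*(0ₙ, end conv{a_t : t ∈ T(x̄)})⁻¹
            = sup_{D ∈ 𝒟(x̄)} d_*(0ₙ, conv{a_t : t ∈ D})⁻¹`. -/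
theorem clmF_eq_endSet_eq_sup_Dfam
    {n : ℕ} {T : Type*} [MetricSpace T] [CompactSpace T]
    (a : T → (Fin n → ℝ)) (ha : Continuous a)
    (p : Seminorm ℝ (Fin n → ℝ)) (hp : ∀ x, p x = 0 → x = 0)
    (bbar : C(T, ℝ)) (hdom : (feas a bbar).Nonempty)
    (xbar : Fin n → ℝ) (hxbar : xbar ∈ feas a bbar)
    (hf0 : fSup a bbar xbar = 0)
    (hreg : ∃ W ∈ 𝓝 xbar,
      feas a bbar ∩ W =
        ((fun u => xbar + u) '' negPolar (coneHull (a '' activeIdx a bbar xbar))) ∩ W) :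
    clmF a p bbar xbar
        = (dualDist0 p (endSet (convexHull ℝ (a '' activeIdx a bbar xbar))))⁻¹ ∧
    clmF a p bbar xbar
        = ⨆ D ∈ Dfam a bbar xbar, (dualDist0 p (convexHull ℝ (a '' D)))⁻¹ := by
  have h1 := clmF_le_iSup_Dfam ha p hp hxbar hreg
  have h2 := iSup_Dfam_le_inv_dualDist0_endSet a p bbar xbar
  have h3 := inv_dualDist0_endSet_le_clmF ha p hp hxbar
  exact ⟨le_antisymm (h1.trans h2) h3, le_antisymm h1 (h2.trans h3)⟩
end
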